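/- Let Λ be a finite-dimensional algebra over an algebraically closed field K presented by a quiver whose underlying graph is a tree, with radical square zero. If Λ is τ-tilting-finite, then Λ is representation-finite. -/

import Mathlib

/- Formalization of statements from
   "Report on the finiteness of silting objects"
   by T. Aihara, T. Honma, K. Miyamoto, Q. Wang. -/

open CategoryTheory CategoryTheory.Limits

universe u v w

noncomputable section
namespace PaperSilting
/-! ### Module-theoretic notions.

We model right `Λ`-modules as left modules over the opposite ring; all the
definitions below are stated for left modules over a ring `R` and are applied
with `R := Λᵐᵒᵖ`. -/

/-- The category of `R`-modules (in `Type 0`). -/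
abbrev ModCat (R : Type) [Ring R] := ModuleCat.{0} R

variable {R : Type} [Ring R]

/-- The module object `M` is finitely generated. -/
def IsFGMod {R : Type} [Ring R] (M : ModCat R) : Prop := Module.Finite R M

/-- Indecomposable module object. -/
def IsIndecMod {R : Type} [Ring R] (M : ModCat R) : Prop :=
  ¬ IsZero M ∧ ∀ A B : ModCat R, Nonempty (M ≅ A ⊞ B) → IsZero A ∨ IsZero B

/-- `N` belongs to `add M`, i.e. `N` is a direct summand of a finite direct sum
of copies of `M`. -/
def MemAddMod {R : Type} [Ring R] (N M : ModCat R) : Prop :=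
  ∃ (k : ℕ) (g : N ⟶ ⨁ (fun _ : Fin k => M)) (h : (⨁ (fun _ : Fin k => M)) ⟶ N),
    g ≫ h = 𝟙 N

/-- A basic module: it has no direct summand of the form `N ⊕ N` with `N ≠ 0`. -/
def IsBasicMod {R : Type} [Ring R] (M : ModCat R) : Prop :=
  ∀ N X : ModCat R, Nonempty (M ≅ (N ⊞ N) ⊞ X) → IsZero N

/-- `M` is τ-rigid, i.e. `Hom(M, τM) = 0`: there is a projective presentation
`P₁ → P₀ → M → 0` by finitely generated projectives such that
`Hom(P₀, M) → Hom(P₁, M)` is surjective (Adachi–Iyama–Reiten). -/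
def IsTauRigidMod {R : Type} [Ring R] (M : ModCat R) : Prop :=
  ∃ (P₁ P₀ : ModCat R) (f : P₁ ⟶ P₀) (g : P₀ ⟶ M),
    Projective P₁ ∧ Projective P₀ ∧ IsFGMod P₁ ∧ IsFGMod P₀ ∧
    Function.Surjective g ∧ Function.Exact f g ∧
    ∀ h : P₁ ⟶ M, ∃ k : P₀ ⟶ M, f ≫ k = h

/-- A τ-rigid pair `(M, P)`: `M` is a τ-rigid module and `P` is a finitely
generated projective with `Hom(P, M) = 0`. -/
def IsTauRigidPairMod {R : Type} [Ring R] (M P : ModCat R) : Prop :=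
  IsFGMod M ∧ IsTauRigidMod M ∧ IsFGMod P ∧ Projective P ∧ ∀ f : P ⟶ M, f = 0

/-- `M` is a support τ-tilting module: `(M, P)` is a maximal τ-rigid pair for
some projective `P` (Adachi–Iyama–Reiten; equivalently, `M` is the `0`-th
cohomology of a two-term silting complex in `K^b(proj)`). -/
def IsSupportTauTiltingMod {R : Type} [Ring R] (M : ModCat R) : Prop :=
  ∃ P : ModCat R, IsTauRigidPairMod M P ∧
    ∀ N Q : ModCat R, IsTauRigidPairMod (M ⊞ N) (P ⊞ Q) → MemAddMod N M ∧ MemAddMod Q P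

/-- The ring `R` admits only finitely many basic support τ-tilting modules up
to isomorphism. -/
def IsTauTiltingFiniteRing (R : Type) [Ring R] : Prop :=
  ∃ (n : ℕ) (f : Fin n → ModCat R),
    ∀ M : ModCat R, IsSupportTauTiltingMod M → IsBasicMod M → ∃ i, Nonempty (M ≅ f i)

/-- The ring `R` admits only finitely many finitely generated indecomposable
modules up to isomorphism. -/
def IsRepFiniteRing (R : Type) [Ring R] : Prop :=
  ∃ (n : ℕ) (f : Fin n → ModCat R),
    ∀ M : ModCat R, IsFGMod M → IsIndecMod M → ∃ i, Nonempty (M ≅ f i)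

/-- `R` has exactly `n` isomorphism classes of basic support τ-tilting modules. -/
def SupportTauTiltingCount (R : Type) [Ring R] (n : ℕ) : Prop :=
  ∃ f : Fin n → ModCat R,
    (∀ i, IsSupportTauTiltingMod (f i) ∧ IsBasicMod (f i)) ∧
    (∀ i j, Nonempty (f i ≅ f j) → i = j) ∧
    (∀ M : ModCat R, IsSupportTauTiltingMod M → IsBasicMod M → ∃ i, Nonempty (M ≅ f i))

/-- An algebra `Λ` is τ-tilting-finite (with respect to right modules,
i.e. left `Λᵐᵒᵖ`-modules). -/
def IsTauTiltingFinite (Λ : Type) [Ring Λ] : Prop := IsTauTiltingFiniteRing Λᵐᵒᵖ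

/-- An algebra `Λ` is representation-finite (with respect to right modules). -/
def IsRepFinite (Λ : Type) [Ring Λ] : Prop := IsRepFiniteRing Λᵐᵒᵖ
/-! ### Radical, idempotents and the (Gabriel) quiver of an algebra. -/

/-- `x` lies in the Jacobson radical (left quasi-regular characterization). -/
def InRad (Λ : Type) [Ring Λ] (x : Λ) : Prop := ∀ y : Λ, IsUnit (1 - y * x)

/-- `x` lies in the square of the Jacobson radical. -/
def InRadSq (Λ : Type) [Ring Λ] (x : Λ) : Prop :=
  x ∈ AddSubgroup.closure {z : Λ | ∃ a b : Λ, InRad Λ a ∧ InRad Λ b ∧ z = a * b}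

/-- The Jacobson radical squares to zero. -/
def RadSqZero (Λ : Type) [Ring Λ] : Prop :=
  ∀ x y : Λ, InRad Λ x → InRad Λ y → x * y = 0

/-- A primitive idempotent. -/
def IsPrimitiveIdem (Λ : Type) [Ring Λ] (f : Λ) : Prop :=
  IsIdempotentElem f ∧ f ≠ 0 ∧
  ∀ a b : Λ, IsIdempotentElem a → IsIdempotentElem b →
    a * b = 0 → b * a = 0 → a + b = f → a = 0 ∨ b = 0

/-- A complete family of pairwise orthogonal primitive idempotents. -/
def IsCompletePrimitiveFamily (Λ : Type) [Ring Λ] {n : ℕ} (e : Fin n → Λ) : Prop :=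
  (∀ i, IsPrimitiveIdem Λ (e i)) ∧ (∀ i j, i ≠ j → e i * e j = 0) ∧ (∑ i, e i) = 1

/-- There is an arrow `i → j` in the Gabriel quiver of `Λ`
(i.e. `e i · (rad Λ / rad² Λ) · e j ≠ 0`). -/
def HasArrow (Λ : Type) [Ring Λ] {n : ℕ} (e : Fin n → Λ) (i j : Fin n) : Prop :=
  ∃ x : Λ, InRad Λ x ∧ ¬ InRadSq Λ (e i * x * e j)

/-- The underlying graph of the Gabriel quiver of `Λ`. -/
def QuiverGraph (Λ : Type) [Ring Λ] {n : ℕ} (e : Fin n → Λ) : SimpleGraph (Fin n) :=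
  SimpleGraph.fromRel (fun i j => HasArrow Λ e i j)

/-- Between any two vertices there is (up to scalars) at most a one-dimensional
space of arrows, i.e. `dim_K (e i · (rad/rad²) · e j) ≤ 1`. -/
def ArrowMultLE1 (Λ : Type) [Ring Λ] (K : Type) [Field K] [Algebra K Λ] {n : ℕ}
    (e : Fin n → Λ) : Prop :=
  ∀ (i j : Fin n) (x y : Λ), InRad Λ x → InRad Λ y →
    ∃ a b : K, (a ≠ 0 ∨ b ≠ 0) ∧ InRadSq Λ (a • (e i * x * e j) + b • (e i * y * e j))

/-- `Λ` is presented by a quiver whose underlying graph is a tree. -/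
def IsTreeQuiverAlgebra (Λ : Type) [Ring Λ] (K : Type) [Field K] [Algebra K Λ] : Prop :=
  ∃ (n : ℕ) (e : Fin n → Λ), IsCompletePrimitiveFamily Λ e ∧
    (∀ i, ¬ HasArrow Λ e i i) ∧
    (∀ i j, ¬ (HasArrow Λ e i j ∧ HasArrow Λ e j i)) ∧
    ArrowMultLE1 Λ K e ∧
    (QuiverGraph Λ e).IsTree

/-!
Two-colour the vertices of the tree. Since the square of the radical is zero, every module over the
basic algebra is the cokernel of a radical map between projectives, and such a map is a
representation of a bipartite quiver having each vertex once as a source and once as a sink.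
Repeatedly reflecting the simple representations at the sinks produces the preprojective ones.

If these vanish eventually, every indecomposable representation is preprojective, because reflecting
it in the other direction must end in zero, so there are finitely many. Otherwise there are nonzero
preprojectives of arbitrarily high order. They have scalar endomorphisms and no self-extensions, and
there are no nonzero maps from higher to lower order. Infinitely many of them are supported on the
sources of one fixed colour and the sinks of the other; their cokernels are τ-rigid, and by Bongartz
completion each is a summand of a basic support τ-tilting module. If there are only finitely many
such modules, one of them has summands of infinitely many orders, and the kernels of the projections
to these summands yield an infinite strictly descending chain of submodules.
-/

section TrivialIdempotents

variable {C : Type u} [Category.{v} C] [HasZeroMorphisms C]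

/-- A nonzero object all of whose idempotent endomorphisms are trivial. In an idempotent complete
additive category these are the indecomposable objects; the definition avoids biproducts. -/
def HasTrivialIdempotents (X : C) : Prop :=
  ¬ IsZero X ∧ ∀ p : X ⟶ X, p ≫ p = p → p = 0 ∨ p = 𝟙 X

theorem HasTrivialIdempotents.nonempty_iso_of_retract {X Y : C} (hY : HasTrivialIdempotents Y)
    (hX : ¬ IsZero X) (r : Retract X Y) : Nonempty (Y ≅ X) := by
  rcases hY.2 (r.r ≫ r.i) (by simp) with h | h
  · refine absurd ((IsZero.iff_id_eq_zero X).2 ?_) hX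
    calc 𝟙 X = r.i ≫ (r.r ≫ r.i) ≫ r.r := by simp
      _ = 0 := by simp [h]
  · exact ⟨⟨r.r, r.i, h, r.retract⟩⟩

theorem HasTrivialIdempotents.of_map {D : Type w} [Category.{v} D] [HasZeroMorphisms D]
    (F : C ⥤ D) [F.PreservesZeroMorphisms] {X : C}
    (hF : Function.Injective fun f : X ⟶ X => F.map f)
    (hX : HasTrivialIdempotents (F.obj X)) : HasTrivialIdempotents X := by
  refine ⟨fun h => hX.1 ?_, fun p hp => ?_⟩
  · rw [IsZero.iff_id_eq_zero, ← F.map_id, h.eq_of_src (𝟙 X) 0, F.map_zero]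
  · refine (hX.2 (F.map p) (by rw [← F.map_comp, hp])).imp (fun h => hF ?_) fun h => hF ?_
    · exact h.trans (F.map_zero X X).symm
    · exact h.trans (F.map_id X).symm

theorem HasTrivialIdempotents.of_iso {X Y : C} (e : X ≅ Y) (hX : HasTrivialIdempotents X) :
    HasTrivialIdempotents Y := by
  refine ⟨fun h => hX.1 (h.of_iso e), fun p hp => ?_⟩
  refine (hX.2 (e.hom ≫ p ≫ e.inv) (by simp [reassoc_of% hp])).imp (fun h => ?_) fun h => ?_
  · simpa using congrArg (fun q => e.inv ≫ q ≫ e.hom) h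
  · simpa using congrArg (fun q => e.inv ≫ q ≫ e.hom) h

end TrivialIdempotents

/-- An object of a `K`-linear category all of whose endomorphisms are scalars. -/
def HasScalarEnds (K : Type u) [Field K] {C : Type w} [Category.{v} C] [Preadditive C] [Linear K C]
    (X : C) : Prop :=
  ∀ f : X ⟶ X, ∃ c : K, f = c • 𝟙 X

/-! ### Representations of bipartite quivers -/

/-- A finite-dimensional representation of the bipartite quiver whose sources and sinks are two
copies of `I`, with one arrow from the source `a` to the sink `b` whenever `E a b`. -/
structure BipartiteRep (K : Type u) [Field K] {I : Type u} (E : I → I → Prop) where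
  source : I → Type u
  target : I → Type u
  [sourceAddCommGroup : ∀ a, AddCommGroup (source a)]
  [targetAddCommGroup : ∀ b, AddCommGroup (target b)]
  [sourceModule : ∀ a, Module K (source a)]
  [targetModule : ∀ b, Module K (target b)]
  [sourceFinite : ∀ a, FiniteDimensional K (source a)]
  [targetFinite : ∀ b, FiniteDimensional K (target b)]
  map : ∀ {a b}, E a b → source a →ₗ[K] target b

namespace BipartiteRep

attribute [instance] sourceAddCommGroup targetAddCommGroup sourceModule targetModule
  sourceFinite targetFinite

variable {K : Type u} [Field K] {I : Type u} {E : I → I → Prop}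

section Category

/-- The space of morphisms of representations, as a subspace of the space of all families of linear
maps; its module structure makes `BipartiteRep K E` a `K`-linear category. -/
def homSubmodule (U V : BipartiteRep K E) : Submodule K
    ((∀ a, U.source a →ₗ[K] V.source a) × (∀ b, U.target b →ₗ[K] V.target b)) where
  carrier := {f | ∀ a b (h : E a b) u, f.2 b (U.map h u) = V.map h (f.1 a u)}
  add_mem' hf hg a b h u := by simp [hf a b h u, hg a b h u]
  zero_mem' a b h u := by simp
  smul_mem' c f hf a b h u := by simp [hf a b h u]

instance : Category (BipartiteRep K E) where
  Hom U V := homSubmodule U V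
  id _ := ⟨(fun _ => LinearMap.id, fun _ => LinearMap.id), fun _ _ _ _ => rfl⟩
  comp f g := ⟨(fun a => g.1.1 a ∘ₗ f.1.1 a, fun b => g.1.2 b ∘ₗ f.1.2 b), fun a b h u => by
    simp [f.2 a b h, g.2 a b h]⟩

instance : Preadditive (BipartiteRep K E) where
  homGroup U V := inferInstanceAs (AddCommGroup (homSubmodule U V))
  add_comp _ _ _ _ _ _ := Subtype.ext <|
    Prod.ext (funext fun _ => LinearMap.comp_add _ _ _) (funext fun _ => LinearMap.comp_add _ _ _)
  comp_add _ _ _ _ _ _ := Subtype.ext <|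
    Prod.ext (funext fun _ => LinearMap.add_comp _ _ _) (funext fun _ => LinearMap.add_comp _ _ _)

instance : Linear K (BipartiteRep K E) where
  homModule U V := inferInstanceAs (Module K (homSubmodule U V))
  smul_comp _ _ _ _ _ _ := Subtype.ext <|
    Prod.ext (funext fun _ => LinearMap.comp_smul _ _ _) (funext fun _ => LinearMap.comp_smul _ _ _)
  comp_smul _ _ _ _ _ _ := Subtype.ext <|
    Prod.ext (funext fun _ => LinearMap.smul_comp _ _ _) (funext fun _ => LinearMap.smul_comp _ _ _)

variable {U V W : BipartiteRep K E}

/-- The components of a morphism at the sources. -/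
def onSource (f : U ⟶ V) (a : I) : U.source a →ₗ[K] V.source a := f.1.1 a

/-- The components of a morphism at the sinks. -/
def onTarget (f : U ⟶ V) (b : I) : U.target b →ₗ[K] V.target b := f.1.2 b

/-- The morphism with given components. -/
def mkHom (x : ∀ a, U.source a →ₗ[K] V.source a) (y : ∀ b, U.target b →ₗ[K] V.target b)
    (h : ∀ a b (h : E a b) u, y b (U.map h u) = V.map h (x a u)) : U ⟶ V :=
  ⟨(x, y), h⟩

@[simp] theorem onTarget_mkHom (x : ∀ a, U.source a →ₗ[K] V.source a)
    (y : ∀ b, U.target b →ₗ[K] V.target b) (h) (b : I) : onTarget (mkHom x y h) b = y b := rfl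

theorem onTarget_map (f : U ⟶ V) {a b : I} (h : E a b) (u : U.source a) :
    onTarget f b (U.map h u) = V.map h (onSource f a u) := f.2 a b h u

theorem hom_ext {f g : U ⟶ V} (hs : ∀ a, onSource f a = onSource g a)
    (ht : ∀ b, onTarget f b = onTarget g b) : f = g :=
  Subtype.ext (Prod.ext (funext hs) (funext ht))

@[simp] theorem onTarget_id (b : I) : onTarget (𝟙 U) b = LinearMap.id := rfl
@[simp] theorem onTarget_comp (f : U ⟶ V) (g : V ⟶ W) (b : I) :
    onTarget (f ≫ g) b = onTarget g b ∘ₗ onTarget f b := rfl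
@[simp] theorem onTarget_add (f g : U ⟶ V) (b : I) :
    onTarget (f + g) b = onTarget f b + onTarget g b := rfl
@[simp] theorem onTarget_smul (c : K) (f : U ⟶ V) (b : I) :
    onTarget (c • f) b = c • onTarget f b := rfl

theorem isZero_iff : IsZero U ↔
    (∀ a, Subsingleton (U.source a)) ∧ ∀ b, Subsingleton (U.target b) := by
  rw [IsZero.iff_id_eq_zero]
  refine ⟨fun h => ⟨fun a => ?_, fun b => ?_⟩, fun ⟨hs, ht⟩ => hom_ext (fun a => ?_) fun b => ?_⟩
  · exact subsingleton_of_forall_eq 0 fun u =>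
      LinearMap.congr_fun (congrArg (fun f => onSource f a) h) u
  · exact subsingleton_of_forall_eq 0 fun u =>
      LinearMap.congr_fun (congrArg (fun f => onTarget f b) h) u
  · exact Subsingleton.elim _ _
  · exact Subsingleton.elim _ _

end Category

section Reflection

open scoped Classical

/-- The map from the space at the source `a` to the spaces at all targets of arrows from `a`. -/
def toTargets (U : BipartiteRep K E) (a : I) : U.source a →ₗ[K] ∀ b : {b // E a b}, U.target b :=
  LinearMap.pi fun b => U.map b.2

@[simp] theorem toTargets_apply (U : BipartiteRep K E) {a : I} (u : U.source a) (b : {b // E a b}) :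
    U.toTargets a u b = U.map b.2 u := rfl

/-- The structure maps at the sources are jointly injective; equivalently, no simple representation
at a source is a summand. -/
def IsSourceInjective (U : BipartiteRep K E) : Prop := ∀ a, Function.Injective (U.toTargets a)

variable {U V : BipartiteRep K E}

theorem toTargets_onSource (f : U ⟶ V) (a : I) (u : U.source a) :
    V.toTargets a (onSource f a u) =
      fun b : {b // E a b} => onTarget f b (U.toTargets a u b) :=
  funext fun b => (onTarget_map f b.2 u).symm

theorem IsSourceInjective.hom_ext (hV : V.IsSourceInjective) {f g : U ⟶ V}
    (h : ∀ b, onTarget f b = onTarget g b) : f = g := by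
  refine BipartiteRep.hom_ext (fun a => LinearMap.ext fun u => hV a ?_) h
  simp only [toTargets_onSource, h]

variable [Fintype I]

/-- The map to the space at the sink `b` from the spaces at all sources of arrows into `b`. -/
def fromSources (U : BipartiteRep K E) (b : I) :
    (∀ a : {a // E a b}, U.source a) →ₗ[K] U.target b :=
  LinearMap.lsum K (fun a : {a // E a b} => U.source a) K fun a => U.map a.2

/-- The structure maps are jointly surjective onto the sinks; equivalently, no simple representation
at a sink is a summand. -/
def IsTargetSurjective (U : BipartiteRep K E) : Prop := ∀ b, Function.Surjective (U.fromSources b)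

theorem fromSources_single (U : BipartiteRep K E) {a b : I} (h : E a b) (u : U.source a) :
    U.fromSources b (Pi.single (⟨a, h⟩ : {a // E a b}) u) = U.map h u :=
  LinearMap.lsum_piSingle K _ K (fun a : {a // E a b} => U.map a.2) ⟨a, h⟩ u

theorem fromSources_map_single (U : BipartiteRep K E) {X : I → Type u} [∀ a, AddCommGroup (X a)]
    [∀ a, Module K (X a)] (f : ∀ a, X a →ₗ[K] U.source a) {a b : I} (h : E a b) (x : X a) :
    U.fromSources b (fun c : {a // E a b} =>
      f c ((Pi.single ⟨a, h⟩ x : ∀ c : {a // E a b}, X c) c)) = U.map h (f a x) := by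
  rw [← fromSources_single]
  congr 1
  ext c
  exact Pi.apply_single (fun c : {a // E a b} => f c) (fun _ => map_zero _) ⟨a, h⟩ x c

theorem onTarget_fromSources (f : U ⟶ V) (b : I) (x : ∀ a : {a // E a b}, U.source a) :
    onTarget f b (U.fromSources b x) = V.fromSources b fun a => onSource f a (x a) := by
  simp [fromSources, onTarget_map]

theorem IsTargetSurjective.hom_ext (hU : U.IsTargetSurjective) {f g : U ⟶ V}
    (h : ∀ a, onSource f a = onSource g a) : f = g := by
  refine BipartiteRep.hom_ext h fun b => LinearMap.ext fun y => ?_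
  obtain ⟨x, rfl⟩ := hU b y
  simp only [onTarget_fromSources, h]

theorem IsTargetSurjective.isZero (hU : U.IsTargetSurjective)
    (h : ∀ a, Subsingleton (U.source a)) : IsZero U :=
  (IsZero.iff_id_eq_zero U).2 <| hU.hom_ext fun a => have := h a; Subsingleton.elim _ _

/-- The image of a representation under the reflection at all sources: the former sinks become
sources, and the space at a new sink is the cokernel of the map into all former targets. -/
abbrev cokerRep (U : BipartiteRep K E) : BipartiteRep K (Function.swap E) where
  source := U.target
  target a := (∀ b : {b // E a b}, U.target b) ⧸ LinearMap.range (U.toTargets a)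
  map {b a} h := Submodule.mkQ _ ∘ₗ
    LinearMap.single K (fun b : {b // E a b} => U.target b) ⟨b, h⟩

/-- The image of a representation under the reflection at all sinks: the former sources become
sinks, and the space at a new source is the kernel of the map from all former sources. -/
abbrev kerRep (U : BipartiteRep K E) : BipartiteRep K (Function.swap E) where
  source b := LinearMap.ker (U.fromSources b)
  target := U.source
  map {b a} h := LinearMap.proj (⟨a, h⟩ : {a // E a b}) ∘ₗ Submodule.subtype _

theorem fromSources_cokerRep (U : BipartiteRep K E) (a : I) :
    U.cokerRep.fromSources a = (LinearMap.range (U.toTargets a)).mkQ := by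
  refine LinearMap.pi_ext fun b u => ?_
  exact fromSources_single U.cokerRep b.2 u

theorem isTargetSurjective_cokerRep (U : BipartiteRep K E) : U.cokerRep.IsTargetSurjective :=
  fun a => by rw [fromSources_cokerRep]; exact Submodule.mkQ_surjective _

theorem exact_toTargets_fromSources_cokerRep (U : BipartiteRep K E) (a : I) :
    Function.Exact (U.toTargets a) (U.cokerRep.fromSources a) := by
  rw [fromSources_cokerRep, LinearMap.exact_iff, Submodule.ker_mkQ]

theorem isSourceInjective_kerRep (U : BipartiteRep K E) : U.kerRep.IsSourceInjective :=
  fun _ _ _ h => Subtype.ext h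

theorem exact_toTargets_kerRep_fromSources (U : BipartiteRep K E) (b : I) :
    Function.Exact (U.kerRep.toTargets b) (U.fromSources b) := fun x =>
  ⟨fun h => ⟨⟨x, h⟩, rfl⟩, by rintro ⟨u, rfl⟩; exact u.2⟩

/-- A morphism out of `U.cokerRep` is given by its components at the sources, which have to
annihilate the relations imposed by `U`. -/
def cokerDesc {W : BipartiteRep K (Function.swap E)} (f : ∀ b, U.target b →ₗ[K] W.source b)
    (hf : ∀ a u, W.fromSources a (fun b : {b // E a b} => f b (U.toTargets a u b)) = 0) :
    U.cokerRep ⟶ W :=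
  let F (a : I) : (∀ b : {b // E a b}, U.target b) →ₗ[K] W.target a :=
    W.fromSources a ∘ₗ LinearMap.pi fun b : {b // E a b} => f b ∘ₗ LinearMap.proj b
  mkHom f (fun a => (LinearMap.range (U.toTargets a)).liftQ (F a) (by
      rintro _ ⟨u, rfl⟩
      exact hf a u))
    fun _ _ h u => (Submodule.liftQ_apply _ _ _).trans (fromSources_map_single W f h u)

/-- The Bernstein–Gelfand–Ponomarev reflection functor `BipartiteRep.cokerRep`. -/
def cokerFunctor (K : Type u) [Field K] (E : I → I → Prop) :
    BipartiteRep K E ⥤ BipartiteRep K (Function.swap E) where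
  obj := cokerRep
  map {U V} f := cokerDesc (onTarget f) fun a u => by
    rw [← toTargets_onSource]
    exact V.exact_toTargets_fromSources_cokerRep a |>.apply_apply_eq_zero _
  map_id U := U.isTargetSurjective_cokerRep.hom_ext fun _ => rfl
  map_comp {U _ _} _ _ := U.isTargetSurjective_cokerRep.hom_ext fun _ => rfl

instance : (cokerFunctor K E).Additive where
  map_add {U _ _ _} := U.isTargetSurjective_cokerRep.hom_ext fun _ => rfl

instance : (cokerFunctor K E).Linear K where
  map_smul {U _} _ _ := U.isTargetSurjective_cokerRep.hom_ext fun _ => rfl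

theorem IsSourceInjective.cokerFunctor_map_injective (hV : V.IsSourceInjective) :
    Function.Injective fun f : U ⟶ V => (cokerFunctor K E).map f := fun _ _ h =>
  hV.hom_ext fun b => congrArg (fun k => onSource k b) h

theorem IsSourceInjective.cokerFunctor_map_surjective (hV : V.IsSourceInjective)
    (g : U.cokerRep ⟶ V.cokerRep) : ∃ f : U ⟶ V, (cokerFunctor K E).map f = g := by
  have hg (a : I) (u : U.source a) :
      (fun b : {b // E a b} => onSource g b (U.toTargets a u b)) ∈
        LinearMap.range (V.toTargets a) := by
    refine (V.exact_toTargets_fromSources_cokerRep a _).1 ?_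
    rw [← onTarget_fromSources g a (U.toTargets a u),
      (U.exact_toTargets_fromSources_cokerRep a).apply_apply_eq_zero, map_zero]
  let t (a : I) : U.source a →ₗ[K] LinearMap.range (V.toTargets a) :=
    (LinearMap.pi fun b : {b // E a b} => onSource g b ∘ₗ U.map b.2).codRestrict _ (hg a)
  let e (a : I) := LinearEquiv.ofInjective (V.toTargets a) (hV a)
  have he (a : I) (u : U.source a) (b : {b // E a b}) :
      V.toTargets a ((e a).symm (t a u)) b = onSource g b (U.map b.2 u) :=
    congrFun (congrArg Subtype.val ((e a).apply_symm_apply (t a u))) b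
  refine ⟨mkHom (fun a => (e a).symm.toLinearMap ∘ₗ t a) (onSource g)
    fun a b h u => (he a u ⟨b, h⟩).symm, ?_⟩
  exact U.isTargetSurjective_cokerRep.hom_ext fun _ => rfl

/-- The adjunction between the two reflections, in one direction. -/
def cokerDescOfToKerRep {W : BipartiteRep K (Function.swap E)} (g : W ⟶ U.kerRep) :
    W.cokerRep ⟶ U :=
  cokerDesc (E := Function.swap E) (onTarget g) fun b u => by
    refine (congrArg (U.fromSources b) (toTargets_onSource g b u).symm).trans ?_
    exact (U.exact_toTargets_kerRep_fromSources b).apply_apply_eq_zero _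

/-- Reflecting at the sinks and back recovers a representation without simple summands at sinks. -/
theorem IsTargetSurjective.nonempty_cokerRep_kerRep_iso (hU : U.IsTargetSurjective) :
    Nonempty (U.kerRep.cokerRep ≅ U) := by
  let ε : U.kerRep.cokerRep ⟶ U := cokerDescOfToKerRep (𝟙 U.kerRep)
  have hε (b : I) (x : ∀ a : {a // E a b}, U.source a) :
      onTarget ε b (U.kerRep.cokerRep.fromSources b x) = U.fromSources b x :=
    onTarget_fromSources ε b x
  have hbij (b : I) : Function.Bijective (onTarget ε b) := by
    refine ⟨(injective_iff_map_eq_zero _).2 fun y hy => ?_, fun y => ?_⟩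
    · obtain ⟨x, rfl⟩ := U.kerRep.isTargetSurjective_cokerRep b y
      rw [hε] at hy
      exact (U.kerRep.exact_toTargets_fromSources_cokerRep b x).2 ⟨⟨x, hy⟩, rfl⟩
    · obtain ⟨x, rfl⟩ := hU b y
      exact ⟨_, hε b x⟩
  let e (b : I) := LinearEquiv.ofBijective (onTarget ε b) (hbij b)
  refine ⟨⟨ε, mkHom (fun _ => LinearMap.id) (fun b => (e b).symm) fun a b h u => ?_, ?_, ?_⟩⟩
  · exact (e b).symm_apply_eq.2 (onTarget_map ε h u).symm
  · exact U.kerRep.isTargetSurjective_cokerRep.hom_ext fun _ => rfl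
  · exact hU.hom_ext fun _ => rfl

theorem hasTrivialIdempotents_kerRep (hU : U.IsTargetSurjective) (h : HasTrivialIdempotents U) :
    HasTrivialIdempotents U.kerRep :=
  .of_map (cokerFunctor K (Function.swap E)) U.isSourceInjective_kerRep.cokerFunctor_map_injective
    (h.of_iso hU.nonempty_cokerRep_kerRep_iso.some.symm)

theorem eq_zero_of_cokerDescOfToKerRep_eq_zero {W : BipartiteRep K (Function.swap E)}
    {g : W ⟶ U.kerRep} (h : cokerDescOfToKerRep g = 0) : g = 0 :=
  U.isSourceInjective_kerRep.hom_ext fun b => congrArg (fun k => onSource k b) h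

theorem isZero_cokerRep (h : ∀ b, Subsingleton (U.target b)) : IsZero U.cokerRep :=
  U.isTargetSurjective_cokerRep.isZero h

theorem hasScalarEnds_cokerRep (hU : HasScalarEnds K U) (hi : U.IsSourceInjective) :
    HasScalarEnds K U.cokerRep := fun g => by
  obtain ⟨f, rfl⟩ := hi.cokerFunctor_map_surjective g
  obtain ⟨c, rfl⟩ := hU f
  exact ⟨c, ((cokerFunctor K E).map_smul c (𝟙 U)).trans
    (congrArg (c • ·) ((cokerFunctor K E).map_id U))⟩

/-- The projection onto the kernel of `U.toTargets a` is an endomorphism vanishing at all sinks, so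
if it is a nonzero scalar then `U` lives at the sources only. -/
theorem isSourceInjective_of_hasScalarEnds (hU : HasScalarEnds K U) (hz : ¬ IsZero U.cokerRep) :
    U.IsSourceInjective := by
  intro a
  rw [← LinearMap.ker_eq_bot]
  by_contra hne
  obtain ⟨u, hu, hu0⟩ := Submodule.exists_mem_ne_zero_of_ne_bot hne
  obtain ⟨r, hr⟩ := (LinearMap.ker (U.toTargets a)).subtype.exists_leftInverse_of_injective
    (Submodule.ker_subtype _)
  let x : ∀ a, U.source a →ₗ[K] U.source a :=
    Function.update 0 a ((LinearMap.ker (U.toTargets a)).subtype ∘ₗ r)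
  have hxa (w : U.source a) : x a w = r w := by simp [x]
  have hx (a' b : I) (h : E a' b) (w : U.source a') : U.map h (x a' w) = 0 := by
    obtain rfl | ha := eq_or_ne a' a
    · rw [hxa]
      exact congrFun (r w).2 ⟨b, h⟩
    · simp [x, ha]
  obtain ⟨c, hc⟩ := hU (mkHom x 0 fun a b h u => (hx a b h u).symm)
  have hcu : c • u = u := by
    have h : x a u = c • u := LinearMap.congr_fun (congrArg (fun f => onSource f a) hc) u
    rw [← h, hxa]
    exact congrArg Subtype.val (LinearMap.congr_fun hr ⟨u, hu⟩)
  have hc0 : c ≠ 0 := by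
    rintro rfl
    exact hu0 (by rw [← hcu, zero_smul])
  refine hz (isZero_cokerRep fun b => subsingleton_of_forall_eq 0 fun y => ?_)
  have h : 0 = c • y := LinearMap.congr_fun (congrArg (fun f => onTarget f b) hc) y
  exact (smul_eq_zero.1 h.symm).resolve_left hc0

end Reflection

section Rigid

open scoped Classical

/-- A representation without self-extensions: the cokernel of
`(u, v) ↦ (U.map · ∘ u + v ∘ U.map ·)`, which computes `Ext¹(U, U)`, vanishes. -/
def IsRigid (U : BipartiteRep K E) : Prop :=
  ∀ h : ∀ a b, E a b → U.source a →ₗ[K] U.target b,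
    ∃ (u : ∀ a, U.source a →ₗ[K] U.source a) (v : ∀ b, U.target b →ₗ[K] U.target b),
      ∀ a b (hab : E a b) z, h a b hab z = U.map hab (u a z) + v b (U.map hab z)

variable [Fintype I]

theorem IsRigid.cokerRep {U : BipartiteRep K E} (hU : U.IsRigid) : U.cokerRep.IsRigid := by
  intro h
  have hlift (a : I) := Module.projective_lifting_property (U.cokerRep.fromSources a)
    (LinearMap.lsum K (fun b : {b // E a b} => U.target b) K fun b => h b a b.2)
    (U.isTargetSurjective_cokerRep a)
  choose k hk using hlift
  have hk_single {a b : I} (hab : E a b) (z : U.target b) :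
      U.cokerRep.fromSources a (k a (Pi.single ⟨b, hab⟩ z)) = h b a hab z :=
    (LinearMap.congr_fun (hk a) _).trans
      (LinearMap.lsum_piSingle K _ K (fun b : {b // E a b} => h b a b.2) ⟨b, hab⟩ z)
  obtain ⟨u, v, huv⟩ := hU fun a b hab =>
    LinearMap.proj (⟨b, hab⟩ : {b // E a b}) ∘ₗ k a ∘ₗ U.toTargets a
  let d (a : I) : (∀ b : {b // E a b}, U.target b) →ₗ[K] ∀ b : {b // E a b}, U.target b :=
    LinearMap.pi fun b => v b ∘ₗ LinearMap.proj b
  have hkd (a : I) (z : U.source a) : (k a - d a) (U.toTargets a z) = U.toTargets a (u a z) :=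
    funext fun b => sub_eq_of_eq_add (huv a b b.2 z)
  let w (a : I) : U.cokerRep.target a →ₗ[K] U.cokerRep.target a :=
    (LinearMap.range (U.toTargets a)).mapQ _ (k a - d a) (by
      rintro _ ⟨z, rfl⟩
      exact ⟨u a z, (hkd a z).symm⟩)
  have hw (a : I) (x : ∀ b : {b // E a b}, U.target b) :
      w a (U.cokerRep.fromSources a x) =
        U.cokerRep.fromSources a (k a x) - U.cokerRep.fromSources a (d a x) := by
    rw [← map_sub, fromSources_cokerRep]
    rfl
  refine ⟨v, w, fun b a hab z => ?_⟩
  rw [← hk_single, ← fromSources_single U.cokerRep hab z, hw,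
    ← fromSources_map_single U.cokerRep v hab z]
  exact (add_sub_cancel _ _).symm

end Rigid

section SimpleSink

open scoped Classical

/-- The simple representation at the sink `v`. The space `PLift (b = v) → K` is `K` if `b = v` and
zero otherwise. -/
abbrev simpleSink (K : Type u) [Field K] (E : I → I → Prop) (v : I) : BipartiteRep K E where
  source _ := PUnit
  target b := PLift (b = v) → K
  map _ := 0

variable {U V : BipartiteRep K E} {v : I}

theorem simpleSink_hom_ext {f g : simpleSink K E v ⟶ U}
    (h : onTarget f v (fun _ => 1) = onTarget g v (fun _ => 1)) : f = g := by
  refine hom_ext (fun a => Subsingleton.elim _ _) fun b => LinearMap.ext fun x => ?_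
  by_cases hb : b = v
  · subst hb
    have hx : x = x ⟨rfl⟩ • fun _ => 1 := by
      ext ⟨_⟩
      simp
    rw [hx, map_smul, map_smul, h]
  · obtain rfl : x = 0 := funext fun p => absurd p.down hb
    rw [map_zero, map_zero]

/-- The morphism from a simple representation picking out a vector at the sink. -/
def simpleSinkDesc (y : U.target v) : simpleSink K E v ⟶ U :=
  mkHom (fun _ => 0)
    (fun b => Fintype.linearCombination K fun p : PLift (b = v) => (p.down.symm ▸ y : U.target b))
    fun _ _ _ _ => by simp

theorem onTarget_simpleSinkDesc (y : U.target v) :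
    onTarget (simpleSinkDesc (E := E) y) v (fun _ => 1) = y := by
  simp [simpleSinkDesc, Fintype.linearCombination_apply,
    Fintype.sum_subsingleton _ (⟨rfl⟩ : PLift (v = v))]

theorem eq_zero_of_simpleSinkDesc_eq_zero {y : U.target v}
    (h : simpleSinkDesc (E := E) y = 0) : y = 0 := by
  rw [← onTarget_simpleSinkDesc (E := E) y, h]
  rfl

/-- The morphism to a simple representation defined by a linear functional that vanishes on the
images of all arrows. -/
def simpleSinkLift (l : U.target v →ₗ[K] K) (hl : ∀ a (h : E a v) u, l (U.map h u) = 0) :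
    U ⟶ simpleSink K E v :=
  mkHom (fun _ => 0) (fun b => LinearMap.pi fun p : PLift (b = v) => p.down ▸ l) fun a b h u => by
    ext ⟨rfl⟩
    exact hl a h u

theorem onTarget_simpleSinkLift (l : U.target v →ₗ[K] K) (hl) (y : U.target v) :
    onTarget (simpleSinkLift (E := E) l hl) v y = fun _ => l y := rfl

theorem not_isZero_simpleSink : ¬ IsZero (simpleSink K E v) := fun h =>
  have := (isZero_iff.1 h).2 v
  zero_ne_one (congrFun (Subsingleton.elim (0 : PLift (v = v) → K) 1) ⟨rfl⟩)

theorem isRigid_simpleSink : (simpleSink K E v).IsRigid := fun h =>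
  ⟨0, 0, fun a b hab z => by
    rw [Subsingleton.elim z 0, map_zero]
    simp⟩

theorem hasScalarEnds_simpleSink : HasScalarEnds K (simpleSink K E v) := fun f =>
  ⟨onTarget f v (fun _ => 1) ⟨rfl⟩, simpleSink_hom_ext <| by
    ext ⟨_⟩
    simp⟩

variable [Fintype I]

theorem hom_cokerRep_simpleSink_eq_zero (f : U.cokerRep ⟶ simpleSink K (Function.swap E) v) :
    f = 0 :=
  U.isTargetSurjective_cokerRep.hom_ext fun _ => Subsingleton.elim _ _

/-- A linear functional vanishing on the images of all arrows to `v` splits off the simple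
representation at `v`. -/
theorem nonempty_iso_simpleSink_or_isTargetSurjective (hU : HasTrivialIdempotents U) :
    (∃ v, Nonempty (U ≅ simpleSink K E v)) ∨ U.IsTargetSurjective := by
  refine or_iff_not_imp_right.2 fun hs => ?_
  obtain ⟨v, hv⟩ := not_forall.1 hs
  obtain ⟨l, hl0, hl⟩ := Submodule.exists_le_ker_of_lt_top (LinearMap.range (U.fromSources v))
    (lt_top_iff_ne_top.2 (mt LinearMap.range_eq_top.1 hv))
  obtain ⟨y, hy⟩ := LinearMap.surjective hl0 1
  have hlmap (a : I) (h : E a v) (u : U.source a) : l (U.map h u) = 0 :=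
    hl ⟨_, fromSources_single U h u⟩
  refine ⟨v, hU.nonempty_iso_of_retract not_isZero_simpleSink
    ⟨simpleSinkDesc y, simpleSinkLift l hlmap, simpleSink_hom_ext ?_⟩⟩
  calc onTarget (simpleSinkLift l hlmap) v (onTarget (simpleSinkDesc y) v fun _ => 1)
    _ = fun _ => l y := by rw [onTarget_simpleSinkDesc, onTarget_simpleSinkLift]
    _ = (fun _ => 1 : PLift (v = v) → K) := by rw [hy]

end SimpleSink

section Preprojective

/-- The representations obtained from the simple ones at sinks by repeated reflection; the nonzero
ones are the indecomposable preprojective representations. -/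
def preprojective (K : Type u) [Field K] [Fintype I] :
    ℕ → ∀ (E : I → I → Prop), I → BipartiteRep K E
  | 0, E, v => simpleSink K E v
  | k + 1, E, v => (preprojective K k (Function.swap E) v).cokerRep

/-- The support of `U` consists of the sources of colour `s` and the sinks of the other colour. -/
def IsSupportedOn (c : I → Bool) (s : Bool) (U : BipartiteRep K E) : Prop :=
  (∀ a, c a ≠ s → Subsingleton (U.source a)) ∧ ∀ b, c b = s → Subsingleton (U.target b)

variable [Fintype I]

theorem IsSupportedOn.cokerRep {c : I → Bool} (hc : ∀ a b, E a b → c a ≠ c b) {s : Bool}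
    {U : BipartiteRep K E} (hU : U.IsSupportedOn c s) : U.cokerRep.IsSupportedOn c (!s) := by
  refine ⟨fun b hb => hU.2 b (by simpa using hb), fun a ha => ?_⟩
  have (b : {b // E a b}) : Subsingleton (U.target b) :=
    hU.2 b (by simpa [ha] using (hc a b b.2).symm)
  exact (U.isTargetSurjective_cokerRep a).subsingleton

theorem exists_isSupportedOn_preprojective (c : I → Bool) (k : ℕ) :
    ∀ (E : I → I → Prop) (v : I), (∀ a b, E a b → c a ≠ c b) →
      ∃ s, (preprojective K k E v).IsSupportedOn c s := by
  induction k with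
  | zero =>
    refine fun E v _ => ⟨!c v, fun _ _ => inferInstanceAs (Subsingleton PUnit), fun b hb => ?_⟩
    have : IsEmpty (PLift (b = v)) := ⟨fun ⟨h⟩ => by simp [h] at hb⟩
    exact inferInstanceAs (Subsingleton (PLift (b = v) → K))
  | succ k ih =>
    intro E v hc
    obtain ⟨s, hs⟩ := ih (Function.swap E) v fun a b h => (hc b a h).symm
    exact ⟨!s, hs.cokerRep fun a b h => (hc b a h).symm⟩

theorem isRigid_preprojective (k : ℕ) : ∀ (E : I → I → Prop) (v : I),
    (preprojective K k E v).IsRigid := by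
  induction k with
  | zero => exact fun _ _ => isRigid_simpleSink
  | succ k ih => exact fun E v => (ih (Function.swap E) v).cokerRep

theorem isZero_preprojective_succ {k : ℕ} {E : I → I → Prop} {v : I}
    (h : IsZero (preprojective K k (Function.swap E) v)) : IsZero (preprojective K (k + 1) E v) :=
  isZero_cokerRep (isZero_iff.1 h).2

theorem hasScalarEnds_preprojective (k : ℕ) : ∀ (E : I → I → Prop) (v : I),
    ¬ IsZero (preprojective K k E v) → HasScalarEnds K (preprojective K k E v) := by
  induction k with
  | zero => exact fun E v _ => hasScalarEnds_simpleSink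
  | succ k ih =>
    intro E v h
    have hU := ih (Function.swap E) v (mt isZero_preprojective_succ h)
    exact hasScalarEnds_cokerRep hU (isSourceInjective_of_hasScalarEnds hU h)

theorem isSourceInjective_preprojective {k : ℕ} {E : I → I → Prop} {v : I}
    (h : ¬ IsZero (preprojective K (k + 1) (Function.swap E) v)) :
    (preprojective K k E v).IsSourceInjective :=
  isSourceInjective_of_hasScalarEnds
    (hasScalarEnds_preprojective k E v (mt isZero_preprojective_succ h)) h

theorem preprojective_hom_eq_zero (k : ℕ) : ∀ (E : I → I → Prop) {l : ℕ} {v w : I}, k < l →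
    ¬ IsZero (preprojective K k E v) →
      ∀ f : preprojective K l E w ⟶ preprojective K k E v, f = 0 := by
  induction k with
  | zero =>
    rintro E (_ | l) v w hl - f
    · exact absurd hl (lt_irrefl 0)
    · exact hom_cokerRep_simpleSink_eq_zero (E := Function.swap E) f
  | succ k ih =>
    rintro E (_ | l) v w hl hz f
    · exact absurd hl (Nat.not_lt_zero _)
    · obtain ⟨g, rfl⟩ := (isSourceInjective_preprojective hz).cokerFunctor_map_surjective f
      rw [ih (Function.swap E) (Nat.lt_of_succ_lt_succ hl) (mt isZero_preprojective_succ hz) g]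
      exact Functor.map_zero _ _ _

/-- Induction on `k`: reflecting `U` at the sinks turns morphisms from `preprojective K (k + 1)`
into morphisms from `preprojective K k`, and for `k = 0` the two hypotheses force `U = 0`. -/
theorem exists_iso_preprojective (k : ℕ) : ∀ (E : I → I → Prop) {U : BipartiteRep K E},
    HasTrivialIdempotents U → (∀ v, ∀ f : preprojective K k E v ⟶ U, f = 0) →
      (∀ v, ∀ f : preprojective K (k + 1) E v ⟶ U, f = 0) →
        ∃ j v, Nonempty (U ≅ preprojective K j E v) := by
  induction k with
  | zero =>
    intro E U hU h0 h1
    have ht (b : I) : Subsingleton (U.target b) := subsingleton_of_forall_eq 0 fun y =>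
      eq_zero_of_simpleSinkDesc_eq_zero (h0 b (simpleSinkDesc y))
    have hs (a : I) : Subsingleton (U.source a) := subsingleton_of_forall_eq 0 fun x =>
      eq_zero_of_simpleSinkDesc_eq_zero (U := U.kerRep) <|
        eq_zero_of_cokerDescOfToKerRep_eq_zero (h1 a _)
    exact absurd (isZero_iff.2 ⟨hs, ht⟩) hU.1
  | succ k ih =>
    intro E U hU h0 h1
    obtain ⟨v, hv⟩ | hs := nonempty_iso_simpleSink_or_isTargetSurjective hU
    · exact ⟨0, v, hv⟩
    obtain ⟨j, v, ⟨e⟩⟩ := ih (Function.swap E) (hasTrivialIdempotents_kerRep hs hU)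
      (fun v f => eq_zero_of_cokerDescOfToKerRep_eq_zero (h0 v _))
      (fun v f => eq_zero_of_cokerDescOfToKerRep_eq_zero (h1 v _))
    exact ⟨j + 1, v, ⟨hs.nonempty_cokerRep_kerRep_iso.some.symm ≪≫
      (cokerFunctor K (Function.swap E)).mapIso e⟩⟩

end Preprojective

section Splitting

variable {U : BipartiteRep K E}

/-- The image of an endomorphism. -/
abbrev rangeRep (g : U ⟶ U) : BipartiteRep K E where
  source a := LinearMap.range (onSource g a)
  target b := LinearMap.range (onTarget g b)
  map {a b} h := (U.map h).restrict (p := LinearMap.range (onSource g a))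
    (q := LinearMap.range (onTarget g b)) <| by
      rintro _ ⟨u, rfl⟩
      exact ⟨_, onTarget_map g h u⟩

/-- An idempotent endomorphism exhibits its image as a retract. -/
def retractRangeRep (g : U ⟶ U) (hg : g ≫ g = g) : Retract (rangeRep g) U where
  i := mkHom (fun _ => Submodule.subtype _) (fun _ => Submodule.subtype _) fun _ _ _ _ => rfl
  r := mkHom (fun a => (onSource g a).rangeRestrict) (fun b => (onTarget g b).rangeRestrict)
    fun _ _ h u => Subtype.ext (onTarget_map g h u)
  retract := by
    refine hom_ext (fun a => LinearMap.ext ?_) fun b => LinearMap.ext ?_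
    · rintro ⟨_, u, rfl⟩
      exact Subtype.ext (LinearMap.congr_fun (congrArg (fun f => onSource f a) hg) u)
    · rintro ⟨_, u, rfl⟩
      exact Subtype.ext (LinearMap.congr_fun (congrArg (fun f => onTarget f b) hg) u)

theorem retractRangeRep_r_i (g : U ⟶ U) (hg : g ≫ g = g) :
    (retractRangeRep g hg).r ≫ (retractRangeRep g hg).i = g := rfl

/-- The total dimension of a representation. -/
def totalDim [Fintype I] (U : BipartiteRep K E) : ℕ :=
  ∑ a, (Module.finrank K (U.source a) + Module.finrank K (U.target a))

theorem eq_id_of_totalDim_le_totalDim_rangeRep [Fintype I] {g : U ⟶ U} (hg : g ≫ g = g)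
    (h : U.totalDim ≤ (rangeRep g).totalDim) : g = 𝟙 U := by
  have hs (a : I) := Submodule.finrank_le (LinearMap.range (onSource g a))
  have ht (a : I) := Submodule.finrank_le (LinearMap.range (onTarget g a))
  have hle (a : I) (_ : a ∈ Finset.univ) := Nat.add_le_add (hs a) (ht a)
  have heq := (Finset.sum_eq_sum_iff_of_le hle).1 (le_antisymm (Finset.sum_le_sum hle) h)
  have hr (a : I) : LinearMap.range (onSource g a) = ⊤ ∧ LinearMap.range (onTarget g a) = ⊤ := by
    have := heq a (Finset.mem_univ a)
    have := hs a
    have := ht a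
    constructor <;> exact Submodule.eq_top_of_finrank_eq (by omega)
  refine hom_ext (fun a => LinearMap.ext fun u => ?_) fun b => LinearMap.ext fun y => ?_
  · obtain ⟨u, rfl⟩ := LinearMap.range_eq_top.1 (hr a).1 u
    exact LinearMap.congr_fun (congrArg (fun f => onSource f a) hg) u
  · obtain ⟨y, rfl⟩ := LinearMap.range_eq_top.1 (hr b).2 y
    exact LinearMap.congr_fun (congrArg (fun f => onTarget f b) hg) y

end Splitting

end BipartiteRep
/-! ### Bongartz completion -/

section LinearMaps

variable {P₁ P₀ M N A : Type} [AddCommGroup P₁] [Module R P₁] [AddCommGroup P₀] [Module R P₀]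
  [AddCommGroup M] [Module R M] [AddCommGroup N] [Module R N] [AddCommGroup A] [Module R A]

theorem exists_comp_eq_of_exact {f : P₁ →ₗ[R] P₀} {g : P₀ →ₗ[R] M} (hg : Function.Surjective g)
    (hfg : Function.Exact f g) (k : P₀ →ₗ[R] N) (hk : k ∘ₗ f = 0) :
    ∃ u : M →ₗ[R] N, u ∘ₗ g = k :=
  ⟨(LinearMap.range f).liftQ k (LinearMap.range_le_ker_iff.2 hk) ∘ₗ
    (hfg.linearEquivOfSurjective hg).symm.toLinearMap, by ext x; simp⟩

theorem exists_lift_of_exact [Module.Projective R A] {f : P₁ →ₗ[R] P₀} {g : P₀ →ₗ[R] M}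
    (hfg : Function.Exact f g) (h : A →ₗ[R] P₀) (hh : g ∘ₗ h = 0) :
    ∃ k : A →ₗ[R] P₁, f ∘ₗ k = h := by
  obtain ⟨k, hk⟩ := Module.projective_lifting_property f.rangeRestrict
    (h.codRestrict (LinearMap.range f) fun x => (hfg _).1 (LinearMap.congr_fun hh x))
    f.surjective_rangeRestrict
  exact ⟨k, LinearMap.ext fun x => congrArg Subtype.val (LinearMap.congr_fun hk x)⟩

variable {J : Ideal R}

theorem map_mem_smul_top (h : M →ₗ[R] N) {x : M} (hx : x ∈ J • (⊤ : Submodule R M)) :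
    h x ∈ J • (⊤ : Submodule R N) :=
  Submodule.smul_mono le_rfl le_top <| Submodule.map_smul'' J ⊤ h ▸ Submodule.mem_map_of_mem hx

theorem smul_eq_zero_of_mem_smul_top (hJ : J * J = ⊥) {j : R} (hj : j ∈ J) {x : M}
    (hx : x ∈ J • (⊤ : Submodule R M)) : j • x = 0 := by
  have hjx : j • x ∈ J • J • (⊤ : Submodule R M) := Submodule.smul_mem_smul hj hx
  rwa [← Submodule.mul_smul, hJ, Submodule.bot_smul, Submodule.mem_bot] at hjx

theorem map_eq_zero_of_mem_smul_top (hJ : J * J = ⊥) (h : M →ₗ[R] N)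
    (hh : ∀ x, h x ∈ J • (⊤ : Submodule R N)) {x : M} (hx : x ∈ J • (⊤ : Submodule R M)) :
    h x = 0 := by
  refine Submodule.smul_induction_on hx (fun j hj m _ => ?_) fun y z hy hz => by
    rw [map_add, hy, hz, add_zero]
  rw [map_smul, smul_eq_zero_of_mem_smul_top hJ hj (hh m)]

variable {K : Type} [Field K] [Algebra K R]

/-- Multiplication by a scalar of the ground field, as an `R`-linear map.  The `K`-action on an
`R`-module is read off from the structure map, so no second module structure is involved. -/
def scalarEnd (M : Type) [AddCommGroup M] [Module R M] (c : K) : M →ₗ[R] M where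
  toFun x := algebraMap K R c • x
  map_add' := smul_add (algebraMap K R c)
  map_smul' r x := by simp only [RingHom.id_apply, smul_smul, Algebra.commutes]

theorem scalarEnd_apply (c : K) (x : M) :
    (scalarEnd M c : M →ₗ[R] M) x = algebraMap K R c • x := rfl

theorem scalarEnd_comp (c : K) (h : M →ₗ[R] N) : scalarEnd N c ∘ₗ h = h ∘ₗ scalarEnd M c :=
  LinearMap.ext fun x => (h.map_smul _ x).symm

variable (M N K) in
theorem exists_fin_spanning_linearMap [FiniteDimensional K R] [Module.Finite R M]
    [Module.Finite R N] :
    ∃ (m : ℕ) (φ : Fin m → M →ₗ[R] N), ∀ h : M →ₗ[R] N, ∃ c : Fin m → K,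
      h = ∑ i, φ i ∘ₗ scalarEnd M (c i) := by
  let : Module K M := Module.compHom M (algebraMap K R)
  let : Module K N := Module.compHom N (algebraMap K R)
  have : IsScalarTower K R M := .of_algebraMap_smul fun _ _ => rfl
  have : IsScalarTower K R N := .of_algebraMap_smul fun _ _ => rfl
  have : Module.Finite K M := .trans R M
  have : Module.Finite K N := .trans R N
  have : Module.Finite K (M →ₗ[R] N) :=
    .of_injective (LinearMap.restrictScalarsₗ K R M N K) (LinearMap.restrictScalars_injective K)
  obtain ⟨m, φ, hφ⟩ := Module.Finite.exists_fin (R := K) (M := M →ₗ[R] N)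
  refine ⟨m, φ, fun h => ?_⟩
  obtain ⟨c, rfl⟩ := (Submodule.mem_span_range_iff_exists_fun K).1 (hφ ▸ Submodule.mem_top (x := h))
  exact ⟨c, Finset.sum_congr rfl fun i _ => scalarEnd_comp (c i) (φ i)⟩

variable (M N K) in
theorem exists_universal_linearMap [FiniteDimensional K R] [Module.Finite R M]
    [Module.Finite R N] :
    ∃ (k : ℕ) (σ : (Fin k → M) →ₗ[R] N), ∀ u : M →ₗ[R] N, ∃ w, σ ∘ₗ w = u := by
  obtain ⟨k, φ, hφ⟩ := exists_fin_spanning_linearMap (R := R) M N K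
  refine ⟨k, LinearMap.lsum R _ ℕ φ, fun u => ?_⟩
  obtain ⟨c, rfl⟩ := hφ u
  exact ⟨LinearMap.pi fun i => scalarEnd M (c i), by ext x; simp⟩

end LinearMaps

section Summands

variable {L M N X : Type} [AddCommGroup L] [Module R L] [AddCommGroup M] [Module R M]
  [AddCommGroup N] [Module R N] [AddCommGroup X] [Module R X]

/-- `N` is isomorphic to a direct summand of `M`. -/
def IsSummand (R : Type) [Ring R] (N M : Type) [AddCommGroup N] [Module R N] [AddCommGroup M]
    [Module R M] : Prop :=
  ∃ (i : N →ₗ[R] M) (p : M →ₗ[R] N), p ∘ₗ i = LinearMap.id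

/-- The unbundled form of `MemAddMod`: `N` is a direct summand of a finite power of `M`, with the
inclusion and the projection given by their components. -/
def MemAdd (R : Type) [Ring R] (N M : Type) [AddCommGroup N] [Module R N] [AddCommGroup M]
    [Module R M] : Prop :=
  ∃ (ι : Type) (_ : Fintype ι) (g : ι → N →ₗ[R] M) (h : ι → M →ₗ[R] N),
    ∑ i, h i ∘ₗ g i = LinearMap.id

theorem IsSummand.refl : IsSummand R M M := ⟨.id, .id, rfl⟩

theorem IsSummand.fst : IsSummand R M (M × N) := ⟨.inl R M N, .fst R M N, rfl⟩

theorem IsSummand.snd : IsSummand R N (M × N) := ⟨.inr R M N, .snd R M N, rfl⟩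

theorem IsSummand.trans (h₁ : IsSummand R L M) (h₂ : IsSummand R M N) : IsSummand R L N := by
  obtain ⟨i, p, hip⟩ := h₁
  obtain ⟨j, q, hjq⟩ := h₂
  exact ⟨j ∘ₗ i, p ∘ₗ q, by
    rw [LinearMap.comp_assoc, ← LinearMap.comp_assoc i, hjq, LinearMap.id_comp, hip]⟩

theorem IsSummand.of_equiv (e : M ≃ₗ[R] N) : IsSummand R M N :=
  ⟨e, e.symm, LinearMap.ext e.symm_apply_apply⟩

theorem IsSummand.finite (h : IsSummand R N M) [Module.Finite R M] : Module.Finite R N := by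
  obtain ⟨i, p, hip⟩ := h
  exact .of_surjective p fun x => ⟨i x, LinearMap.congr_fun hip x⟩

theorem IsSummand.projective (h : IsSummand R N M) [Module.Projective R M] :
    Module.Projective R N := by
  obtain ⟨i, p, hip⟩ := h
  exact .of_split i p hip

theorem IsSummand.memAdd (h : IsSummand R N M) : MemAdd R N M := by
  obtain ⟨i, p, hip⟩ := h
  exact ⟨Unit, inferInstance, fun _ => i, fun _ => p, by simpa using hip⟩

theorem MemAdd.trans (h₁ : MemAdd R L N) (h₂ : MemAdd R N M) : MemAdd R L M := by
  obtain ⟨ι, _, g, h, hgh⟩ := h₁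
  obtain ⟨κ, _, g', h', hgh'⟩ := h₂
  refine ⟨ι × κ, inferInstance, fun i => g' i.2 ∘ₗ g i.1, fun i => h i.1 ∘ₗ h' i.2, ?_⟩
  rw [Fintype.sum_prod_type, ← hgh]
  refine Finset.sum_congr rfl fun i _ => LinearMap.ext fun x => ?_
  have hx := LinearMap.congr_fun hgh' (g i x)
  simp only [LinearMap.sum_apply, LinearMap.comp_apply, LinearMap.id_apply] at hx ⊢
  rw [← map_sum, hx]

theorem MemAdd.of_comp_eq_id {k : ℕ} (t : N →ₗ[R] Fin k → M) (σ : (Fin k → M) →ₗ[R] N)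
    (h : σ ∘ₗ t = LinearMap.id) : MemAdd R N M :=
  ⟨Fin k, inferInstance, fun i => LinearMap.proj i ∘ₗ t,
    fun i => σ ∘ₗ LinearMap.single R (fun _ => M) i, LinearMap.ext fun x => by
      simp only [LinearMap.sum_apply, LinearMap.comp_apply, LinearMap.proj_apply]
      rw [← map_sum]
      exact (congrArg σ (Finset.univ_sum_single (t x))).trans (LinearMap.congr_fun h x)⟩

theorem MemAdd.memAddMod {N M : ModCat R} (h : MemAdd R N M) : MemAddMod N M := by
  obtain ⟨ι, _, g, h, hgh⟩ := h
  let e := Fintype.equivFin ι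
  refine ⟨Fintype.card ι, biproduct.lift fun i => ModuleCat.ofHom (g (e.symm i)),
    biproduct.desc fun i => ModuleCat.ofHom (h (e.symm i)), ?_⟩
  rw [biproduct.lift_desc, Equiv.sum_comp e.symm fun i => ModuleCat.ofHom (g i) ≫
    ModuleCat.ofHom (h i)]
  ext x
  simpa [ModuleCat.hom_sum] using LinearMap.congr_fun hgh x

theorem linearMap_eq_zero_of_memAdd (h : MemAdd R N M) (hM : ∀ u : L →ₗ[R] M, u = 0)
    (u : L →ₗ[R] N) : u = 0 := by
  obtain ⟨ι, _, g, h, hgh⟩ := h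
  rw [← LinearMap.id_comp u, ← hgh]
  ext x
  simp [← LinearMap.comp_apply, hM (g _ ∘ₗ u)]

theorem MemAdd.isSummand_of_scalar {K : Type} [Field K] [Algebra K R] (h : MemAdd R X M)
    [Nontrivial X] (hX : ∀ u : X →ₗ[R] X, ∃ c : K, u = scalarEnd X c) : IsSummand R X M := by
  obtain ⟨ι, _, g, h, hgh⟩ := h
  choose c hc using fun j => hX (h j ∘ₗ g j)
  obtain ⟨j, hj⟩ : ∃ j, c j ≠ 0 := by
    by_contra! hzero
    obtain ⟨x, hx⟩ := exists_ne (0 : X)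
    have hsum := LinearMap.congr_fun hgh x
    simp only [hc, hzero] at hsum
    exact hx (by simpa [scalarEnd_apply] using hsum.symm)
  refine ⟨g j, scalarEnd X (c j)⁻¹ ∘ₗ h j, LinearMap.ext fun x => ?_⟩
  rw [LinearMap.comp_assoc, hc j]
  simp only [LinearMap.comp_apply, scalarEnd_apply, smul_smul, ← map_mul, inv_mul_cancel₀ hj,
    map_one, one_smul, LinearMap.id_apply]

end Summands

section HomExtends

variable {P₁ P₀ Q₁ Q₀ M W W' : Type} [AddCommGroup P₁] [Module R P₁] [AddCommGroup P₀] [Module R P₀]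
  [AddCommGroup Q₁] [Module R Q₁] [AddCommGroup Q₀] [Module R Q₀] [AddCommGroup M] [Module R M]
  [AddCommGroup W] [Module R W] [AddCommGroup W'] [Module R W']

/-- Every homomorphism to `W` extends along `f`, i.e. `Hom(f, W)` is surjective.  When `f` is a
minimal projective presentation of `M` this says that `Hom(W, τ M) = 0`. -/
def HomExtends (f : P₁ →ₗ[R] P₀) (W : Type) [AddCommGroup W] [Module R W] : Prop :=
  ∀ h : P₁ →ₗ[R] W, ∃ k : P₀ →ₗ[R] W, k ∘ₗ f = h

namespace HomExtends

variable {f : P₁ →ₗ[R] P₀} {g : Q₁ →ₗ[R] Q₀}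

theorem of_memAdd (hf : HomExtends f W) (hW : MemAdd R W' W) : HomExtends f W' := by
  obtain ⟨ι, _, a, b, hab⟩ := hW
  intro l
  choose k hk using fun i => hf (a i ∘ₗ l)
  refine ⟨∑ i, b i ∘ₗ k i, LinearMap.ext fun x => ?_⟩
  have hkx := fun i => LinearMap.congr_fun (hk i) x
  have habx := LinearMap.congr_fun hab (l x)
  simp only [LinearMap.sum_apply, LinearMap.comp_apply, LinearMap.id_apply] at hkx habx ⊢
  simp only [hkx, habx]

theorem pi (hf : HomExtends f W) (ι : Type) : HomExtends f (ι → W) := by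
  intro l
  choose k hk using fun i => hf (LinearMap.proj i ∘ₗ l)
  exact ⟨LinearMap.pi k, LinearMap.ext fun x => funext fun i => LinearMap.congr_fun (hk i) x⟩

theorem prod (hf : HomExtends f W) (hf' : HomExtends f W') : HomExtends f (W × W') := by
  intro l
  obtain ⟨k, hk⟩ := hf (LinearMap.fst R W W' ∘ₗ l)
  obtain ⟨k', hk'⟩ := hf' (LinearMap.snd R W W' ∘ₗ l)
  exact ⟨k.prod k', LinearMap.ext fun x =>
    Prod.ext (LinearMap.congr_fun hk x) (LinearMap.congr_fun hk' x)⟩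

theorem of_surjective [Module.Projective R P₁] (hf : HomExtends f W) (p : W →ₗ[R] W')
    (hp : Function.Surjective p) : HomExtends f W' := by
  intro l
  obtain ⟨l', rfl⟩ := Module.projective_lifting_property p l hp
  obtain ⟨k, rfl⟩ := hf l'
  exact ⟨p ∘ₗ k, rfl⟩

theorem compLeft (hf : HomExtends f W) (m : ℕ) : HomExtends (f.compLeft (Fin m)) W := by
  intro l
  choose k hk using fun i => hf (l ∘ₗ LinearMap.single R (fun _ => P₁) i)
  refine ⟨LinearMap.lsum R _ ℕ k, LinearMap.pi_ext' fun i => ?_⟩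
  rw [← hk i]
  ext x
  change LinearMap.lsum R _ ℕ k (fun j => f ((Pi.single i x : Fin m → P₁) j)) = _
  simp_rw [Pi.apply_single (fun _ => f) (fun _ => map_zero f)]
  exact LinearMap.lsum_piSingle ..

theorem linearMapProd (hf : HomExtends f W) (φ : P₁ →ₗ[R] Q₀) : HomExtends (f.prod φ) W := by
  intro l
  obtain ⟨k, rfl⟩ := hf l
  exact ⟨k ∘ₗ LinearMap.fst R P₀ Q₀, rfl⟩

theorem prodMap (hf : HomExtends f W) (hg : HomExtends g W) : HomExtends (f.prodMap g) W := by
  intro l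
  obtain ⟨k, hk⟩ := hf (l ∘ₗ LinearMap.inl R P₁ Q₁)
  obtain ⟨k', hk'⟩ := hg (l ∘ₗ LinearMap.inr R P₁ Q₁)
  refine ⟨k.coprod k', LinearMap.prod_ext ?_ ?_⟩
  · rw [← hk]; ext x; simp
  · rw [← hk']; ext x; simp

theorem of_homExtends_generator [Module.Finite R W'] [Module.Projective R P₁]
    (hf : HomExtends f W) {ρ : R →ₗ[R] W} (hρ : HomExtends ρ W') : HomExtends f W' := by
  obtain ⟨n, s, hs⟩ := Module.Finite.exists_fin' R W'
  choose y hy using fun i => hρ (s ∘ₗ LinearMap.single R (fun _ : Fin n => R) i)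
  refine (hf.pi (Fin n)).of_surjective (LinearMap.lsum R _ ℕ y) fun l => ?_
  obtain ⟨c, rfl⟩ := hs l
  refine ⟨fun i => ρ (c i), ?_⟩
  have hyc : ∀ i, y i (ρ (c i)) = s (Pi.single i (c i)) := fun i => LinearMap.congr_fun (hy i) (c i)
  simp only [LinearMap.lsum_apply, LinearMap.sum_apply, LinearMap.comp_apply,
    LinearMap.proj_apply, hyc]
  rw [← map_sum]
  exact congrArg s (Finset.univ_sum_single c)

theorem ker {g : P₀ →ₗ[R] M} (hg : Function.Surjective g) (hfg : Function.Exact f g)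
    (hf : HomExtends f W) {σ : W →ₗ[R] W'} (hσ : ∀ u : M →ₗ[R] W', ∃ w, σ ∘ₗ w = u) :
    HomExtends f (LinearMap.ker σ) := by
  intro l
  obtain ⟨k, hk⟩ := hf ((LinearMap.ker σ).subtype ∘ₗ l)
  obtain ⟨u, hu⟩ := exists_comp_eq_of_exact hg hfg (σ ∘ₗ k) (by
    rw [LinearMap.comp_assoc, hk]; ext x; exact (l x).2)
  obtain ⟨w, rfl⟩ := hσ u
  refine ⟨(k - w ∘ₗ g).codRestrict (LinearMap.ker σ) fun x => ?_, LinearMap.ext fun x => ?_⟩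
  · have hux := LinearMap.congr_fun hu x
    simp only [LinearMap.comp_apply] at hux
    simp [hux]
  · have hkx := LinearMap.congr_fun hk x
    simp only [LinearMap.comp_apply] at hkx
    exact Subtype.ext (by simp [hkx, hfg.apply_apply_eq_zero])

theorem exists_lift_of_ker [Module.Projective R P₀] {g : P₀ →ₗ[R] M} (hg : Function.Surjective g)
    (hfg : Function.Exact f g) {σ : W →ₗ[R] W'} (hσ : Function.Surjective σ)
    (hf : HomExtends f (LinearMap.ker σ)) (u : M →ₗ[R] W') : ∃ t : M →ₗ[R] W, σ ∘ₗ t = u := by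
  obtain ⟨v, hv⟩ := Module.projective_lifting_property σ (u ∘ₗ g) hσ
  have hvf : σ ∘ₗ v ∘ₗ f = 0 := by
    rw [← LinearMap.comp_assoc, hv, LinearMap.comp_assoc, hfg.linearMap_comp_eq_zero,
      LinearMap.comp_zero]
  obtain ⟨k, hk⟩ := hf ((v ∘ₗ f).codRestrict (LinearMap.ker σ) (LinearMap.congr_fun hvf))
  obtain ⟨t, ht⟩ := exists_comp_eq_of_exact hg hfg (v - (LinearMap.ker σ).subtype ∘ₗ k) (by
    rw [LinearMap.sub_comp, LinearMap.comp_assoc, hk, sub_eq_zero]; rfl)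
  refine ⟨t, LinearMap.ext fun x => ?_⟩
  obtain ⟨y, rfl⟩ := hg x
  have hty := LinearMap.congr_fun ht y
  have hvy := LinearMap.congr_fun hv y
  simp only [LinearMap.comp_apply] at hty hvy ⊢
  simp [hty, hvy]

end HomExtends

end HomExtends

section Presentations

/-- A presentation `P₁ → P₀ → M → 0` by finitely generated projective modules. -/
structure IsProjPresentation {P₁ P₀ M : Type} [AddCommGroup P₁] [Module R P₁] [AddCommGroup P₀]
    [Module R P₀] [AddCommGroup M] [Module R M] (f : P₁ →ₗ[R] P₀) (g : P₀ →ₗ[R] M) : Prop where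
  projective₁ : Module.Projective R P₁
  projective₀ : Module.Projective R P₀
  finite₁ : Module.Finite R P₁
  finite₀ : Module.Finite R P₀
  surjective : Function.Surjective g
  exact : Function.Exact f g

/-- Every finitely generated module is the image of a finitely generated projective module `P`
under a map with kernel contained in `J P`. -/
def HasProjectiveCovers (J : Ideal R) : Prop :=
  ∀ (N : Type) [AddCommGroup N] [Module R N], Module.Finite R N →
    ∃ (P : Type) (_ : AddCommGroup P) (_ : Module R P) (q : P →ₗ[R] N),
      Module.Projective R P ∧ Module.Finite R P ∧ Function.Surjective q ∧
        LinearMap.ker q ≤ J • ⊤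

variable {J : Ideal R}

theorem HasProjectiveCovers.exists_isProjPresentation [IsNoetherianRing R]
    (hc : HasProjectiveCovers J) (N : Type) [AddCommGroup N] [Module R N] [Module.Finite R N] :
    ∃ (Q₁ Q₀ : Type) (_ : AddCommGroup Q₁) (_ : Module R Q₁) (_ : AddCommGroup Q₀) (_ : Module R Q₀)
      (q : Q₁ →ₗ[R] Q₀) (y : Q₀ →ₗ[R] N), IsProjPresentation q y ∧ LinearMap.ker q ≤ J • ⊤ := by
  obtain ⟨Q₀, _, _, y, hp₀, hf₀, hy, -⟩ := hc N inferInstance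
  obtain ⟨Q₁, _, _, q, hp₁, hf₁, hq, hker⟩ := hc (LinearMap.ker y) inferInstance
  refine ⟨Q₁, Q₀, _, _, _, _, (LinearMap.ker y).subtype ∘ₗ q, y,
    ⟨hp₁, hp₀, hf₁, hf₀, hy, fun x => ⟨fun hx => ?_, ?_⟩⟩, ?_⟩
  · obtain ⟨z, hz⟩ := hq ⟨x, hx⟩
    exact ⟨z, congrArg Subtype.val hz⟩
  · rintro ⟨z, rfl⟩
    exact (q z).2
  · rwa [LinearMap.ker_comp_of_ker_eq_bot _ (Submodule.ker_subtype _)]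

variable {Q₁ Q₀ Y R₁ R₀ Z W : Type} [AddCommGroup Q₁] [Module R Q₁] [AddCommGroup Q₀] [Module R Q₀]
  [AddCommGroup Y] [Module R Y] [AddCommGroup R₁] [Module R R₁] [AddCommGroup R₀] [Module R R₀]
  [AddCommGroup Z] [Module R Z] [AddCommGroup W] [Module R W]

/-- Lifting `a` and `b` to the presentations gives `a₁` and `b₁` with `1 - b₁ a₁` homotopic, up to
a map `t` into the radical, to zero; since `t² = 0`, the map `1 - t` has inverse `1 + t`. -/
theorem HomExtends.of_isSummand (hJ : J * J = ⊥) {q : Q₁ →ₗ[R] Q₀} {y : Q₀ →ₗ[R] Y}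
    (hq : IsProjPresentation q y) (hker : LinearMap.ker q ≤ J • ⊤) {r : R₁ →ₗ[R] R₀}
    {z : R₀ →ₗ[R] Z} (hr : IsProjPresentation r z) (hYZ : IsSummand R Y Z) (h : HomExtends r W) :
    HomExtends q W := by
  have := hq.projective₁; have := hq.projective₀; have := hr.projective₁; have := hr.projective₀
  obtain ⟨a, b, hba⟩ := hYZ
  have yq := hq.exact.linearMap_comp_eq_zero
  have zr := hr.exact.linearMap_comp_eq_zero
  obtain ⟨a₀, ha₀⟩ := Module.projective_lifting_property z (a ∘ₗ y) hr.surjective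
  obtain ⟨b₀, hb₀⟩ := Module.projective_lifting_property y (b ∘ₗ z) hq.surjective
  obtain ⟨a₁, ha₁⟩ := exists_lift_of_exact hr.exact (a₀ ∘ₗ q) (by
    rw [← LinearMap.comp_assoc, ha₀, LinearMap.comp_assoc, yq, LinearMap.comp_zero])
  obtain ⟨b₁, hb₁⟩ := exists_lift_of_exact hq.exact (b₀ ∘ₗ r) (by
    rw [← LinearMap.comp_assoc, hb₀, LinearMap.comp_assoc, zr, LinearMap.comp_zero])
  simp only [LinearMap.ext_iff, LinearMap.comp_apply, LinearMap.id_apply] at hba ha₀ hb₀ ha₁ hb₁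
  obtain ⟨s, hs⟩ := exists_lift_of_exact hq.exact (LinearMap.id - b₀ ∘ₗ a₀) (by
    ext x; simp [hb₀, ha₀, hba])
  replace hs : ∀ x, q (s x) = x - b₀ (a₀ x) := LinearMap.congr_fun hs
  let t : Q₁ →ₗ[R] Q₁ := LinearMap.id - b₁ ∘ₗ a₁ - s ∘ₗ q
  have ht : ∀ x, t x = x - b₁ (a₁ x) - s (q x) := fun x => rfl
  have htJ : ∀ x, t x ∈ J • (⊤ : Submodule R Q₁) := fun x =>
    hker (by rw [LinearMap.mem_ker, ht, map_sub, map_sub, hb₁, ha₁, hs]; abel)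
  have htt : ∀ x, t (t x) = 0 := fun x => map_eq_zero_of_mem_smul_top hJ t htJ (htJ x)
  intro l
  obtain ⟨k, hk⟩ := h (l ∘ₗ (LinearMap.id + t) ∘ₗ b₁)
  refine ⟨k ∘ₗ a₀ + l ∘ₗ (LinearMap.id + t) ∘ₗ s, LinearMap.ext fun x => ?_⟩
  have hkx : k (r (a₁ x)) = l (b₁ (a₁ x) + t (b₁ (a₁ x))) := LinearMap.congr_fun hk _
  have hsum : b₁ (a₁ x) + s (q x) = x - t x := by rw [ht]; abel
  calc k (a₀ (q x)) + l (s (q x) + t (s (q x)))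
      = l ((b₁ (a₁ x) + s (q x)) + t (b₁ (a₁ x) + s (q x))) := by
        rw [← ha₁, hkx, ← map_add, map_add t]; congr 1; abel
    _ = l x := by rw [hsum, map_sub, htt]; congr 1; abel

theorem IsProjPresentation.isTauRigidMod {M : ModCat R} {f : Q₁ →ₗ[R] Q₀} {g : Q₀ →ₗ[R] M}
    (hf : IsProjPresentation f g) (hM : HomExtends f M) : IsTauRigidMod M := by
  refine ⟨ModuleCat.of R Q₁, ModuleCat.of R Q₀, ModuleCat.ofHom f, ModuleCat.ofHom g,
    (IsProjective.iff_projective _).1 hf.projective₁,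
    (IsProjective.iff_projective _).1 hf.projective₀, hf.finite₁, hf.finite₀, hf.surjective,
    hf.exact, fun l => ?_⟩
  obtain ⟨k, hk⟩ := hM l.hom
  exact ⟨ModuleCat.ofHom k, ModuleCat.hom_ext hk⟩

theorem exists_isProjPresentation_of_isTauRigidMod {M : ModCat R} (hM : IsTauRigidMod M)
    (e : M ≃ₗ[R] Y) :
    ∃ (P₁ P₀ : Type) (_ : AddCommGroup P₁) (_ : Module R P₁) (_ : AddCommGroup P₀)
      (_ : Module R P₀) (f : P₁ →ₗ[R] P₀) (g : P₀ →ₗ[R] Y), IsProjPresentation f g ∧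
      HomExtends f Y := by
  obtain ⟨P₁, P₀, f, g, hp₁, hp₀, hf₁, hf₀, hg, hfg, hext⟩ := hM
  refine ⟨P₁, P₀, _, _, _, _, f.hom, e.toLinearMap ∘ₗ g.hom,
    ⟨(IsProjective.iff_projective _).2 hp₁, (IsProjective.iff_projective _).2 hp₀, hf₁, hf₀,
      e.surjective.comp hg, fun x => e.map_eq_zero_iff.trans (hfg x)⟩, fun l => ?_⟩
  obtain ⟨k, hk⟩ := hext (ModuleCat.ofHom (e.symm.toLinearMap ∘ₗ l))
  refine ⟨e.toLinearMap ∘ₗ k.hom, ?_⟩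
  rw [LinearMap.comp_assoc, ← ModuleCat.hom_comp, hk]
  ext x
  simp

end Presentations

section BongartzModule

variable {P₁ P₀ C N X : Type} [AddCommGroup P₁] [Module R P₁] [AddCommGroup P₀] [Module R P₀]
  [AddCommGroup C] [Module R C] [AddCommGroup N] [Module R N] [AddCommGroup X] [Module R X]
  {m : ℕ}

/-- The map `P₁ ^ m → P₀ ^ m × C` with components `f ^ m` and `φ`. -/
def bongartzMap (f : P₁ →ₗ[R] P₀) (φ : Fin m → P₁ →ₗ[R] C) :
    (Fin m → P₁) →ₗ[R] (Fin m → P₀) × C :=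
  (f.compLeft (Fin m)).prod (LinearMap.lsum R (fun _ => P₁) ℕ φ)

theorem bongartzMap_apply (f : P₁ →ₗ[R] P₀) (φ : Fin m → P₁ →ₗ[R] C) (p : Fin m → P₁) :
    bongartzMap f φ p = (fun i => f (p i), ∑ i, φ i (p i)) :=
  Prod.ext rfl (by simp [bongartzMap])

/-- The cokernel of `bongartzMap`.  If `φ` spans `Hom(P₁, C)` and `f` presents `X`, it is the middle
term of the universal extension of `X ^ m` by `C` in the Bongartz completion of `X`. -/
abbrev BongartzModule (f : P₁ →ₗ[R] P₀) (φ : Fin m → P₁ →ₗ[R] C) : Type :=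
  ((Fin m → P₀) × C) ⧸ LinearMap.range (bongartzMap f φ)

namespace BongartzModule

/-- The structure map `C → BongartzModule f φ`. -/
def inclusion (f : P₁ →ₗ[R] P₀) (φ : Fin m → P₁ →ₗ[R] C) : C →ₗ[R] BongartzModule f φ :=
  Submodule.mkQ _ ∘ₗ LinearMap.inr R _ _

variable {f : P₁ →ₗ[R] P₀} (φ : Fin m → P₁ →ₗ[R] C)

theorem homExtends_inclusion (h : HomExtends f N) : HomExtends (inclusion f φ) N := by
  intro x
  choose k hk using fun i => h (x ∘ₗ φ i)
  let z : (Fin m → P₀) × C →ₗ[R] N := (-LinearMap.lsum R _ ℕ k).coprod x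
  have hz : LinearMap.range (bongartzMap f φ) ≤ LinearMap.ker z := by
    rintro _ ⟨p, rfl⟩
    have hkp : ∀ i, k i (f (p i)) = x (φ i (p i)) := fun i => LinearMap.congr_fun (hk i) (p i)
    simp [z, bongartzMap_apply, hkp]
  exact ⟨Submodule.liftQ _ z hz, by ext c; simp [inclusion, z]⟩

theorem homExtends_bongartzMap (h : HomExtends f N) : HomExtends (bongartzMap f φ) N :=
  (h.compLeft m).linearMapProd _

theorem mkQ_inl_compLeft (p : Fin m → P₁) :
    (LinearMap.range (bongartzMap f φ)).mkQ (fun i => f (p i), 0) =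
      -inclusion f φ (∑ i, φ i (p i)) := by
  rw [eq_neg_iff_add_eq_zero, inclusion, LinearMap.comp_apply, ← map_add, Submodule.mkQ_apply,
    Submodule.Quotient.mk_eq_zero]
  exact ⟨p, by rw [bongartzMap_apply, LinearMap.inr_apply, Prod.mk_add_mk, add_zero, zero_add]⟩

section Universal

variable {K : Type} [Field K] [Algebra K R]

theorem exists_extension_inclusion_comp
    (hφ : ∀ β : P₁ →ₗ[R] C, ∃ c : Fin m → K, β = ∑ i, φ i ∘ₗ scalarEnd P₁ (c i))
    (β : P₁ →ₗ[R] C) :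
    ∃ k, k ∘ₗ f = inclusion f φ ∘ₗ β := by
  obtain ⟨c, rfl⟩ := hφ β
  refine ⟨-(Submodule.mkQ _ ∘ₗ LinearMap.inl R _ _ ∘ₗ LinearMap.pi fun i => scalarEnd P₀ (c i)),
    LinearMap.ext fun x => ?_⟩
  have hx := mkQ_inl_compLeft (f := f) φ fun i => (scalarEnd P₁ (c i) : P₁ →ₗ[R] P₁) x
  simp only [scalarEnd_apply, map_smul] at hx
  exact (congrArg (- ·) hx).trans (by simp [scalarEnd_apply])

theorem exists_extension_inl_single_comp
    (hφ : ∀ β : P₁ →ₗ[R] C, ∃ c : Fin m → K, β = ∑ i, φ i ∘ₗ scalarEnd P₁ (c i))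
    {g : P₀ →ₗ[R] X} (hf : IsProjPresentation f g)
    (h : HomExtends f X) (α : P₁ →ₗ[R] P₀) (i : Fin m) :
    ∃ k, k ∘ₗ f = (LinearMap.range (bongartzMap f φ)).mkQ ∘ₗ LinearMap.inl R _ _ ∘ₗ
      LinearMap.single R (fun _ => P₀) i ∘ₗ α := by
  have := hf.projective₁; have := hf.projective₀
  obtain ⟨k, hk⟩ := h (g ∘ₗ α)
  obtain ⟨v, rfl⟩ := Module.projective_lifting_property g k hf.surjective
  obtain ⟨u, hu⟩ := exists_lift_of_exact hf.exact (α - v ∘ₗ f) (by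
    rw [LinearMap.comp_sub, ← LinearMap.comp_assoc, hk, sub_self])
  obtain ⟨k', hk'⟩ := exists_extension_inclusion_comp (f := f) φ hφ (φ i ∘ₗ u)
  have hsingle : ∀ x, (LinearMap.range (bongartzMap f φ)).mkQ (Pi.single i (f (u x)), 0) =
      -inclusion f φ (φ i (u x)) := by
    intro x
    have hx := mkQ_inl_compLeft (f := f) φ (Pi.single i (u x))
    rw [Finset.sum_eq_single i (fun j _ hj => by simp [hj]) (by simp), Pi.single_eq_same] at hx
    simp_rw [Pi.apply_single (fun _ => f) (fun _ => map_zero f)] at hx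
    exact hx
  refine ⟨Submodule.mkQ _ ∘ₗ LinearMap.inl R _ _ ∘ₗ LinearMap.single R (fun _ => P₀) i ∘ₗ v - k',
    LinearMap.ext fun x => ?_⟩
  have hαx : α x = v (f x) + f (u x) := by
    rw [← LinearMap.comp_apply f, hu]; simp
  have hkx : k' (f x) = inclusion f φ (φ i (u x)) := LinearMap.congr_fun hk' x
  calc (LinearMap.range (bongartzMap f φ)).mkQ (Pi.single i (v (f x)), 0) - k' (f x)
      = (LinearMap.range (bongartzMap f φ)).mkQ
          ((Pi.single i (v (f x)), 0) + (Pi.single i (f (u x)), 0)) := by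
        rw [map_add, hsingle, hkx, sub_eq_add_neg]
    _ = (LinearMap.range (bongartzMap f φ)).mkQ (Pi.single i (α x), 0) := by
        rw [hαx, Pi.single_add, Prod.mk_add_mk, add_zero]

theorem homExtends
    (hφ : ∀ β : P₁ →ₗ[R] C, ∃ c : Fin m → K, β = ∑ i, φ i ∘ₗ scalarEnd P₁ (c i))
    {g : P₀ →ₗ[R] X} (hf : IsProjPresentation f g) (h : HomExtends f X) :
    HomExtends f (BongartzModule f φ) := by
  have := hf.projective₁
  intro l
  obtain ⟨l', rfl⟩ := Module.projective_lifting_property (Submodule.mkQ _) l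
    (Submodule.mkQ_surjective _)
  obtain ⟨k, hk⟩ := exists_extension_inclusion_comp (f := f) φ hφ (LinearMap.snd R _ _ ∘ₗ l')
  choose k' hk' using fun i => exists_extension_inl_single_comp φ hφ hf h
    (LinearMap.proj i ∘ₗ LinearMap.fst R _ _ ∘ₗ l') i
  refine ⟨∑ i, k' i + k, LinearMap.ext fun x => ?_⟩
  have hkx : k (f x) = Submodule.mkQ _ (0, (l' x).2) := LinearMap.congr_fun hk x
  have hkx' : ∀ i, k' i (f x) = Submodule.mkQ _ (Pi.single i ((l' x).1 i), 0) :=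
    fun i => LinearMap.congr_fun (hk' i) x
  simp only [LinearMap.comp_apply, LinearMap.add_apply, LinearMap.sum_apply, hkx, hkx']
  rw [← map_sum, ← map_add]
  refine congrArg _ (Prod.ext ?_ (by simp [Prod.snd_sum]))
  simp only [Prod.fst_add, Prod.fst_sum, add_zero]
  exact Finset.univ_sum_single (l' x).1

end Universal

theorem isProjPresentation_prodMap {g : P₀ →ₗ[R] X} (hf : IsProjPresentation f g)
    [Module.Projective R C] [Module.Finite R C] :
    IsProjPresentation (f.prodMap (bongartzMap f φ))
      (g.prodMap (LinearMap.range (bongartzMap f φ)).mkQ) := by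
  have := hf.projective₁; have := hf.projective₀; have := hf.finite₁; have := hf.finite₀
  have hpow : ∀ (P : Type) [AddCommGroup P] [Module R P] [Module.Projective R P],
      Module.Projective R (Fin m → P) := fun P _ _ _ =>
    .of_equiv (DFinsupp.linearEquivFunOnFintype (R := R) (M := fun _ : Fin m => P))
  have := hpow P₁; have := hpow P₀
  refine ⟨inferInstance, inferInstance, inferInstance, inferInstance,
    hf.surjective.prodMap (Submodule.mkQ_surjective _), ?_⟩
  rintro ⟨p, q⟩
  rw [LinearMap.prodMap_apply, Prod.mk_eq_zero, hf.exact p,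
    (bongartzMap f φ).exact_map_mkQ_range q]
  constructor
  · rintro ⟨⟨a, rfl⟩, ⟨b, rfl⟩⟩
    exact ⟨(a, b), rfl⟩
  · rintro ⟨⟨a, b⟩, h⟩
    exact ⟨⟨a, congrArg Prod.fst h⟩, ⟨b, congrArg Prod.snd h⟩⟩

theorem subsingleton_of_linearMap_eq_zero {J : Ideal R} (hJ : J * J = ⊥)
    {f : P₁ →ₗ[R] P₀} (hker : LinearMap.ker f ≤ J • ⊤) (φ : Fin m → P₁ →ₗ[R] R)
    [Module.Projective R N] [Module.Finite R N] (hN : ∀ q : N →ₗ[R] BongartzModule f φ, q = 0) :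
    Subsingleton N := by
  have hdual : ∀ (q : N →ₗ[R] R) x, q x ∈ J • (⊤ : Submodule R R) := by
    intro q x
    obtain ⟨w, hw⟩ := exists_lift_of_exact (bongartzMap f φ).exact_map_mkQ_range
      (LinearMap.inr R (Fin m → P₀) R ∘ₗ q) (hN (inclusion f φ ∘ₗ q))
    have hwx : bongartzMap f φ (w x) = (0, q x) := LinearMap.congr_fun hw x
    have hwker : ∀ i, f (w x i) = 0 := congrFun (congrArg Prod.fst hwx)
    have hqx : q x = ∑ i, φ i (w x i) := by
      simpa [bongartzMap_apply] using (congrArg Prod.snd hwx).symm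
    exact hqx ▸ Submodule.sum_mem _ fun i _ => map_mem_smul_top _ (hker (hwker i))
  obtain ⟨n, s, hs⟩ := Module.Finite.exists_fin' R N
  obtain ⟨t, ht⟩ := Module.projective_lifting_property s LinearMap.id hs
  have hmem : ∀ x : N, x ∈ J • (⊤ : Submodule R N) := by
    intro x
    have hx : s (t x) = x := LinearMap.congr_fun ht x
    rw [← hx, ← Finset.univ_sum_single (t x), map_sum]
    exact Submodule.sum_mem _ fun i _ => map_mem_smul_top
      (s ∘ₗ LinearMap.single R (fun _ : Fin n => R) i) (hdual (LinearMap.proj i ∘ₗ t) x)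
  exact subsingleton_of_forall_eq 0 fun x =>
    map_eq_zero_of_mem_smul_top hJ LinearMap.id hmem (hmem x)

end BongartzModule

end BongartzModule

section BongartzCompletion

variable {M N M' N' C : Type} [AddCommGroup M] [Module R M] [AddCommGroup N] [Module R N]
  [AddCommGroup M'] [Module R M'] [AddCommGroup N'] [Module R N'] [AddCommGroup C] [Module R C]

theorem linearMap_eq_zero_of_isSummand (hM : IsSummand R M M') (hN : IsSummand R N N')
    (h : ∀ u : M' →ₗ[R] N', u = 0) (u : M →ₗ[R] N) : u = 0 := by
  obtain ⟨i, p, hip⟩ := hM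
  obtain ⟨j, q, hjq⟩ := hN
  calc u = (q ∘ₗ j) ∘ₗ u ∘ₗ (p ∘ₗ i) := by
        rw [hip, hjq, LinearMap.id_comp, LinearMap.comp_id]
    _ = q ∘ₗ (j ∘ₗ u ∘ₗ p) ∘ₗ i := rfl
    _ = 0 := by rw [h (j ∘ₗ u ∘ₗ p), LinearMap.zero_comp, LinearMap.comp_zero]

variable (N C) in
theorem isSummand_prod_prod_prod : IsSummand R (N × C) ((N × N) × C) :=
  ⟨(LinearMap.inl R N N).prodMap .id, (LinearMap.fst R N N).prodMap .id, rfl⟩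

variable (N C) in
theorem memAdd_prod_prod_prod : MemAdd R ((N × N) × C) (N × C) := by
  refine ⟨Bool, inferInstance,
    fun b => bif b then (LinearMap.fst R N N).prodMap .id else (LinearMap.snd R N N).prodMap 0,
    fun b => bif b then (LinearMap.inl R N N).prodMap .id else (LinearMap.inr R N N).prodMap 0,
    LinearMap.ext ?_⟩
  rintro ⟨⟨x, y⟩, c⟩
  simp

theorem exists_isBasicMod [IsNoetherianRing R] [IsArtinianRing R] (T₀ : ModCat R)
    [Module.Finite R T₀] :
    ∃ T : ModCat R, IsBasicMod T ∧ IsSummand R T T₀ ∧ MemAdd R T₀ T := by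
  let S : Set (ModCat R) := {T | IsSummand R T T₀ ∧ MemAdd R T₀ T}
  obtain ⟨T, ⟨hTT₀, hT₀T⟩, hmin⟩ := WellFounded.has_min
    (InvImage.wf (fun T : ModCat R => Module.length R T) wellFounded_lt) S
    ⟨T₀, .refl, IsSummand.refl.memAdd⟩
  refine ⟨T, ?_, hTT₀, hT₀T⟩
  rintro N C ⟨e⟩
  let E : T ≃ₗ[R] (N × N) × C := e.toLinearEquiv ≪≫ₗ
    (ModuleCat.biprodIsoProd (N ⊞ N) C).toLinearEquiv ≪≫ₗ
      (ModuleCat.biprodIsoProd N N).toLinearEquiv.prodCongr (.refl R C)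
  have hNC : IsSummand R (N × C) T :=
    (isSummand_prod_prod_prod N C).trans (.of_equiv E.symm)
  have hlength : ¬ Module.length R (N × C) < Module.length R T :=
    hmin (ModuleCat.of R (N × C)) ⟨hNC.trans hTT₀,
      (hT₀T.trans (IsSummand.of_equiv E).memAdd).trans (memAdd_prod_prod_prod N C)⟩
  have := hTT₀.finite
  have := hNC.finite
  have hfin : Module.length R (N × C) ≠ ⊤ := Module.length_ne_top
  rw [ModuleCat.isZero_iff_subsingleton, ← Module.length_eq_zero_iff (R := R)]
  simp only [E.length_eq, Module.length_prod, add_assoc] at hlength hfin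
  by_contra hN
  exact hlength (lt_of_le_of_ne' le_add_self fun h => hN (by simpa [hfin] using h))

variable {J : Ideal R} (K : Type) [Field K] [Algebra K R] [FiniteDimensional K R]
  {P₁ P₀ X T : Type} [AddCommGroup P₁] [Module R P₁] [AddCommGroup P₀] [Module R P₀]
  [AddCommGroup X] [Module R X] [AddCommGroup T] [Module R T] {f : P₁ →ₗ[R] P₀} {g : P₀ →ₗ[R] X}
  {m : ℕ} {φ : Fin m → P₁ →ₗ[R] R}

theorem surjective_of_universal_of_inclusion (hN : HomExtends f N) {k : ℕ}
    {σ : (Fin k → X × BongartzModule f φ) →ₗ[R] N}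
    (hσ : ∀ u : (X × BongartzModule f φ) →ₗ[R] N, ∃ w, σ ∘ₗ w = u) :
    Function.Surjective σ := by
  intro n
  obtain ⟨y, hy⟩ := BongartzModule.homExtends_inclusion φ hN (LinearMap.toSpanSingleton R N n)
  obtain ⟨w, hw⟩ := hσ (y ∘ₗ LinearMap.snd R _ _)
  refine ⟨w (0, BongartzModule.inclusion f φ 1), (LinearMap.congr_fun hw _).trans ?_⟩
  simpa using LinearMap.congr_fun hy 1

/-- Extensions of `T × N` by the kernel of the universal map `T₀ ^ k → N` split, where
`T₀ = X × BongartzModule f φ`; hence `N` is a direct summand of `T₀ ^ k`. -/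
theorem memAdd_of_homExtends_prod [IsNoetherianRing R] (hJ : J * J = ⊥)
    (hf : IsProjPresentation f g) (hker : LinearMap.ker f ≤ J • ⊤)
    (hφ : ∀ β : P₁ →ₗ[R] R, ∃ c : Fin m → K, β = ∑ i, φ i ∘ₗ scalarEnd P₁ (c i))
    (hX : HomExtends f X) (hT : MemAdd R (X × BongartzModule f φ) T) (hXT : IsSummand R X T)
    [Module.Finite R N] {R₁ R₀ : Type} [AddCommGroup R₁] [Module R R₁] [AddCommGroup R₀]
    [Module R R₀] {r : R₁ →ₗ[R] R₀} {z : R₀ →ₗ[R] T × N} (hr : IsProjPresentation r z)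
    (hrTN : HomExtends r (T × N)) : MemAdd R N T := by
  have := hf.projective₁; have := hf.projective₀; have := hf.finite₁; have := hf.finite₀
  have := hr.projective₁; have := hr.projective₀; have := hr.finite₁; have := hr.finite₀
  have : Module.Finite R X := .of_surjective g hf.surjective
  have hfN : HomExtends f N :=
    (hrTN.of_memAdd IsSummand.snd.memAdd).of_isSummand hJ hf hker hr (hXT.trans .fst)
  have hfT₀ : HomExtends f (X × BongartzModule f φ) :=
    hX.prod (BongartzModule.homExtends φ hφ hf hX)
  have hrB : HomExtends r (BongartzModule f φ) :=
    ((hrTN.of_memAdd IsSummand.fst.memAdd).of_memAdd hT).of_memAdd IsSummand.snd.memAdd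
  obtain ⟨k, σ, hσ⟩ := exists_universal_linearMap (X × BongartzModule f φ) N K (R := R)
  have hfσ : HomExtends f (LinearMap.ker σ) :=
    (hfT₀.pi (Fin k)).ker hf.surjective hf.exact fun u => by
      obtain ⟨w, hw⟩ := hσ (u ∘ₗ LinearMap.fst R _ _)
      refine ⟨w ∘ₗ LinearMap.inl R _ _, ?_⟩
      rw [← LinearMap.comp_assoc, hw]
      rfl
  have hrσ : HomExtends r (LinearMap.ker σ) :=
    hrB.of_homExtends_generator (BongartzModule.homExtends_inclusion φ hfσ)
  obtain ⟨t, ht⟩ := hrσ.exists_lift_of_ker hr.surjective hr.exact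
    (surjective_of_universal_of_inclusion hfN hσ) (LinearMap.snd R T N)
  refine (MemAdd.of_comp_eq_id (t ∘ₗ LinearMap.inr R T N) σ ?_).trans hT
  rw [← LinearMap.comp_assoc, ht]
  rfl

theorem isSummand_biprod (A B : ModCat R) :
    IsSummand R A (A ⊞ B : ModCat R) ∧ IsSummand R B (A ⊞ B : ModCat R) :=
  ⟨IsSummand.fst.trans (.of_equiv (ModuleCat.biprodIsoProd A B).toLinearEquiv.symm),
    IsSummand.snd.trans (.of_equiv (ModuleCat.biprodIsoProd A B).toLinearEquiv.symm)⟩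

theorem isSupportTauTiltingMod_of_memAdd [IsNoetherianRing R] (hJ : J * J = ⊥)
    (hc : HasProjectiveCovers J) (hf : IsProjPresentation f g) (hker : LinearMap.ker f ≤ J • ⊤)
    (hφ : ∀ β : P₁ →ₗ[R] R, ∃ c : Fin m → K, β = ∑ i, φ i ∘ₗ scalarEnd P₁ (c i))
    (hX : HomExtends f X) {T : ModCat R} (hTT₀ : IsSummand R T (X × BongartzModule f φ))
    (hT : MemAdd R (X × BongartzModule f φ) T) (hXT : IsSummand R X T) :
    IsSupportTauTiltingMod T := by
  have := hf.finite₁; have := hf.finite₀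
  have : Module.Finite R X := .of_surjective g hf.surjective
  have : Module.Finite R T := hTT₀.finite
  have hfT₀ := hX.prod (BongartzModule.homExtends φ hφ hf hX)
  have hT₀ := hfT₀.prodMap (BongartzModule.homExtends_bongartzMap φ hfT₀)
  obtain ⟨Q₁, Q₀, _, _, _, _, q, y, hq, hqker⟩ := hc.exists_isProjPresentation T
  let Z : ModCat R := ModuleCat.of R PUnit
  refine ⟨Z, ⟨‹_›, hq.isTauRigidMod ?_, (inferInstance : Module.Finite R PUnit),
    (IsProjective.iff_projective _).1 inferInstance, fun l => ?_⟩, ?_⟩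
  · exact (hT₀.of_memAdd hTT₀.memAdd).of_isSummand hJ hq hqker
      (BongartzModule.isProjPresentation_prodMap φ hf) hTT₀
  · ext x
    rw [Subsingleton.elim (α := PUnit) x 0, map_zero, map_zero]
  rintro N Q ⟨hfin, hrigid, hfinQ, hprojQ, hhom⟩
  have : Module.Finite R (T ⊞ N : ModCat R) := hfin
  have : Module.Finite R (Z ⊞ Q : ModCat R) := hfinQ
  have : Module.Projective R (Z ⊞ Q : ModCat R) := (IsProjective.iff_projective _).2 hprojQ
  have := (isSummand_biprod T N).2.finite
  have := (isSummand_biprod Z Q).2.finite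
  have := (isSummand_biprod Z Q).2.projective
  constructor
  · obtain ⟨R₁, R₀, _, _, _, _, r, z, hr, hrTN⟩ := exists_isProjPresentation_of_isTauRigidMod hrigid
      (ModuleCat.biprodIsoProd T N).toLinearEquiv
    exact (memAdd_of_homExtends_prod K hJ hf hker hφ hX hT hXT hr hrTN).memAddMod
  · have hQT : ∀ u : Q →ₗ[R] T, u = 0 :=
      linearMap_eq_zero_of_isSummand (isSummand_biprod Z Q).2 (isSummand_biprod T N).1 fun u =>
        congrArg ModuleCat.Hom.hom (hhom (ModuleCat.ofHom u))
    have hQ : Subsingleton Q := BongartzModule.subsingleton_of_linearMap_eq_zero hJ hker φ <|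
      linearMap_eq_zero_of_memAdd (IsSummand.snd.memAdd.trans hT) hQT
    exact (IsSummand.memAdd (M := Z) ⟨0, 0, Subsingleton.elim _ _⟩).memAddMod

theorem exists_isSupportTauTiltingMod_isSummand [IsNoetherianRing R] [IsArtinianRing R]
    (hJ : J * J = ⊥) (hc : HasProjectiveCovers J) (hf : IsProjPresentation f g)
    (hker : LinearMap.ker f ≤ J • ⊤) (hX : HomExtends f X) [Nontrivial X]
    (hsc : ∀ u : X →ₗ[R] X, ∃ c : K, u = scalarEnd X c) :
    ∃ T : ModCat R, IsSupportTauTiltingMod T ∧ IsBasicMod T ∧ IsFGMod T ∧ IsSummand R X T := by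
  have := hf.finite₁; have := hf.finite₀
  have : Module.Finite R X := .of_surjective g hf.surjective
  obtain ⟨m, φ, hφ⟩ := exists_fin_spanning_linearMap P₁ R K (R := R)
  obtain ⟨T, hbasic, hTT₀, hT⟩ := exists_isBasicMod (ModuleCat.of R (X × BongartzModule f φ))
  have hXT : IsSummand R X T := (IsSummand.fst.memAdd.trans hT).isSummand_of_scalar hsc
  exact ⟨T, isSupportTauTiltingMod_of_memAdd K hJ hc hf hker hφ hX hTT₀ hT hXT, hbasic,
    hTT₀.finite, hXT⟩

end BongartzCompletion

/-! ### Modules over a radical square zero algebra -/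

/-- A presentation of a radical square zero algebra, up to Morita equivalence: idempotents `e a`
generating the unit ideal, an ideal `J` of square zero in the role of the radical, and for each pair
`b`, `a` an element `arrow b a` spanning the corner `e b * R * e a`.  The diagonal corners are
spanned by the idempotents, and `arrow b a` is zero if there is no arrow between `b ≠ a`. -/
structure RadSqZeroData (K R : Type) [Field K] [Ring R] [Algebra K R] (I : Type) where
  e : I → R
  arrow : I → I → R
  J : Ideal R
  isTwoSided : J.IsTwoSided
  J_mul_J : J * J = ⊥
  span_range_e : TwoSidedIdeal.span (Set.range e) = ⊤
  e_mul_e : ∀ a, e a * e a = e a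
  e_ne_zero : ∀ a, e a ≠ 0
  arrow_self : ∀ a, arrow a a = e a
  e_mul_arrow_mul_e : ∀ b a, e b * arrow b a * e a = arrow b a
  exists_smul_arrow : ∀ b a r, ∃ c : K, e b * r * e a = c • arrow b a
  arrow_mem : ∀ {b a}, b ≠ a → arrow b a ∈ J
  e_mul_mul_e_eq_zero : ∀ a, ∀ x ∈ J, e a * x * e a = 0

namespace RadSqZeroData

open scoped TensorProduct Classical

variable {K : Type} [Field K] [Algebra K R] {I : Type} (D : RadSqZeroData K R I)

attribute [instance] RadSqZeroData.isTwoSided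

/-- The arrows of the quiver. -/
def Rel (b a : I) : Prop := b ≠ a ∧ D.arrow b a ≠ 0

theorem e_mul_arrow (b a : I) : D.e b * D.arrow b a = D.arrow b a := by
  rw [← D.e_mul_arrow_mul_e, ← mul_assoc, ← mul_assoc, D.e_mul_e]

theorem le_of_e_smul_mem {M : Type} [AddCommGroup M] [Module R M] {N L : Submodule R M}
    (h : ∀ n ∈ N, ∀ a, D.e a • n ∈ L) : N ≤ L := by
  suffices ∀ r ∈ TwoSidedIdeal.span (Set.range D.e), ∀ n ∈ N, r • n ∈ L from fun n hn =>
    one_smul R n ▸ this 1 (D.span_range_e ▸ TwoSidedIdeal.mem_top R) n hn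
  intro r hr
  induction hr using TwoSidedIdeal.span_induction with
  | mem r hr =>
    obtain ⟨a, rfl⟩ := hr
    exact fun n hn => h n hn a
  | zero => simp
  | add r s _ _ hr hs => exact fun n hn => add_smul r s n ▸ L.add_mem (hr n hn) (hs n hn)
  | neg r _ hr => exact fun n hn => neg_smul r n ▸ L.neg_mem (hr n hn)
  | left_absorb s r _ hr => exact fun n hn => mul_smul s r n ▸ L.smul_mem s (hr n hn)
  | right_absorb s r _ hr => exact fun n hn => mul_smul r s n ▸ hr (s • n) (N.smul_mem s hn)

section Coeff

theorem exists_dual_arrow_eq_one (b a : I) :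
    ∃ f : R →ₗ[K] K, D.arrow b a ≠ 0 → f (D.arrow b a) = 1 := by
  by_cases h : D.arrow b a = 0
  · exact ⟨0, fun h' => absurd h h'⟩
  · exact (Module.Projective.exists_dual_eq_one K h).imp fun _ hf _ => hf

/-- `coeff b a r` is the coordinate of `e b * r * e a` with respect to `arrow b a`. -/
def coeff (b a : I) : R →ₗ[K] K :=
  (D.exists_dual_arrow_eq_one b a).choose ∘ₗ
    LinearMap.mulRight K (D.e a) ∘ₗ LinearMap.mulLeft K (D.e b)

theorem coeff_congr {b a : I} {r s : R} (h : D.e b * r * D.e a = D.e b * s * D.e a) :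
    D.coeff b a r = D.coeff b a s :=
  congrArg (D.exists_dual_arrow_eq_one b a).choose h

theorem coeff_arrow {b a : I} (h : D.arrow b a ≠ 0) : D.coeff b a (D.arrow b a) = 1 := by
  change (D.exists_dual_arrow_eq_one b a).choose (D.e b * D.arrow b a * D.e a) = 1
  rw [D.e_mul_arrow_mul_e]
  exact (D.exists_dual_arrow_eq_one b a).choose_spec h

theorem e_mul_mul_e (b a : I) (r : R) : D.e b * r * D.e a = D.coeff b a r • D.arrow b a := by
  obtain ⟨c, hc⟩ := D.exists_smul_arrow b a r
  by_cases h : D.arrow b a = 0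
  · rw [hc, h, smul_zero, smul_zero]
  · rw [D.coeff_congr (s := c • D.arrow b a), map_smul, D.coeff_arrow h, smul_eq_mul, mul_one, hc]
    rw [mul_smul_comm, smul_mul_assoc, D.e_mul_arrow_mul_e, hc]

theorem coeff_eq_zero_of_mem {a : I} {x : R} (h : x ∈ D.J) : D.coeff a a x = 0 := by
  rw [D.coeff_congr (s := 0) (by simp [D.e_mul_mul_e_eq_zero a x h]), map_zero]

end Coeff

section Proj

/-- The generator of the indecomposable projective `R e_a`. -/
def gen (a : I) : Ideal.span {D.e a} := ⟨D.e a, Ideal.mem_span_singleton_self _⟩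

theorem eq_smul_gen {a : I} (r : Ideal.span {D.e a}) : r = (r : R) • D.gen a := by
  obtain ⟨s, hs⟩ := Ideal.mem_span_singleton'.1 r.2
  refine Subtype.ext ?_
  change (r : R) = r * D.e a
  rw [← hs, mul_assoc, D.e_mul_e]

instance (a : I) : Module.Projective R (Ideal.span {D.e a}) :=
  .of_split (Ideal.span {D.e a}).subtype (LinearMap.toSpanSingleton R _ (D.gen a))
    (LinearMap.ext fun r => (D.eq_smul_gen r).symm)

instance [FiniteDimensional K R] (a : I) : Module.Finite K (Ideal.span {D.e a}) :=
  .of_injective ((Ideal.span {D.e a}).subtype.restrictScalars K) Subtype.val_injective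

variable (V : I → Type) [∀ a, AddCommGroup (V a)] [∀ a, Module K (V a)]

/-- The projective `R`-module whose top is given by the vector spaces `V a`. -/
def Proj : Type := ∀ a, Ideal.span {D.e a} ⊗[K] V a

instance : AddCommGroup (D.Proj V) :=
  inferInstanceAs (AddCommGroup (∀ a, Ideal.span {D.e a} ⊗[K] V a))
instance : Module R (D.Proj V) := inferInstanceAs (Module R (∀ a, Ideal.span {D.e a} ⊗[K] V a))
instance : Module K (D.Proj V) := inferInstanceAs (Module K (∀ a, Ideal.span {D.e a} ⊗[K] V a))
instance : IsScalarTower K R (D.Proj V) :=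
  inferInstanceAs (IsScalarTower K R (∀ a, Ideal.span {D.e a} ⊗[K] V a))

instance [Finite I] : Module.Projective R (D.Proj V) :=
  have := Fintype.ofFinite I
  .of_equiv (DFinsupp.linearEquivFunOnFintype (R := R) (M := fun a => Ideal.span {D.e a} ⊗[K] V a))

instance [Finite I] [FiniteDimensional K R] [∀ a, FiniteDimensional K (V a)] :
    Module.Finite K (D.Proj V) :=
  inferInstanceAs (Module.Finite K (∀ a, Ideal.span {D.e a} ⊗[K] V a))

instance [Finite I] [FiniteDimensional K R] [∀ a, FiniteDimensional K (V a)] :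
    Module.Finite R (D.Proj V) :=
  .of_restrictScalars_finite K R _

variable {V}

/-- The inclusion of `V a` as the top of the `a`-th component of `D.Proj V`. -/
def top (a : I) : V a →ₗ[K] D.Proj V :=
  LinearMap.single K (fun a => Ideal.span {D.e a} ⊗[K] V a) a ∘ₗ
    TensorProduct.mk K (Ideal.span {D.e a}) (V a) (D.gen a)

/-- The coordinate of `e b • x` along `arrow b a`, see `e_smul_eq_sum`. -/
def coord (b a : I) : D.Proj V →ₗ[K] V a :=
  (TensorProduct.lid K (V a)).toLinearMap ∘ₗ
    (D.coeff b a ∘ₗ (Ideal.span {D.e a}).subtype.restrictScalars K).rTensor (V a) ∘ₗ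
    LinearMap.proj (φ := fun a => Ideal.span {D.e a} ⊗[K] V a) a

theorem smul_top_eq_single (a : I) (v : V a) (r : R) :
    r • D.top a v =
      (Pi.single a ((r • D.gen a) ⊗ₜ[K] v) : ∀ a, Ideal.span {D.e a} ⊗[K] V a) :=
  (Pi.single_smul (f := fun a => Ideal.span {D.e a} ⊗[K] V a) a r (D.gen a ⊗ₜ[K] v)).symm

theorem e_smul_top (a : I) (v : V a) : D.e a • D.top a v = D.top a v := by
  rw [smul_top_eq_single, show D.e a • D.gen a = D.gen a from Subtype.ext (D.e_mul_e a)]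
  rfl

theorem coord_smul_top (b a : I) (r : R) (v : V a) :
    D.coord b a (r • D.top a v) = D.coeff b a r • v := by
  rw [smul_top_eq_single]
  change TensorProduct.lid K (V a) (LinearMap.rTensor _ _
    (Pi.single (M := fun a => Ideal.span {D.e a} ⊗[K] V a) a ((r • D.gen a) ⊗ₜ[K] v) a)) = _
  rw [Pi.single_eq_same, LinearMap.rTensor_tmul, TensorProduct.lid_tmul]
  refine congrArg (· • v) (D.coeff_congr (r := r * D.e a) ?_)
  rw [mul_assoc, mul_assoc, D.e_mul_e, mul_assoc]

theorem coord_smul_top_of_ne (b : I) {a a' : I} (h : a' ≠ a) (r : R) (v : V a') :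
    D.coord b a (r • D.top a' v) = 0 := by
  rw [smul_top_eq_single]
  change TensorProduct.lid K (V a) (LinearMap.rTensor _ _
    (Pi.single (M := fun a => Ideal.span {D.e a} ⊗[K] V a) a' ((r • D.gen a') ⊗ₜ[K] v) a)) = _
  rw [Pi.single_eq_of_ne h.symm, map_zero, map_zero]

theorem coord_arrow_smul_top {b a : I} (h : D.arrow b a ≠ 0) (v : V a) :
    D.coord b a (D.arrow b a • D.top a v) = v := by
  rw [coord_smul_top, D.coeff_arrow h, one_smul]

theorem coord_self_top (a : I) (v : V a) : D.coord a a (D.top a v) = v := by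
  have h : D.arrow a a ≠ 0 := D.arrow_self a ▸ D.e_ne_zero a
  rw [← D.e_smul_top, ← D.arrow_self, D.coord_arrow_smul_top h]

variable [Fintype I]

variable {D} in
@[elab_as_elim]
theorem proj_induction {p : D.Proj V → Prop} (zero : p 0)
    (add : ∀ x y, p x → p y → p (x + y)) (smul_top : ∀ (r : R) (a : I) (v : V a), p (r • D.top a v))
    (x : D.Proj V) : p x := by
  have hsingle : ∀ a (t : Ideal.span {D.e a} ⊗[K] V a),
      p (Pi.single a t : ∀ a, Ideal.span {D.e a} ⊗[K] V a) := by
    intro a t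
    induction t using TensorProduct.induction_on with
    | zero => exact (Pi.single_zero (M := fun a => Ideal.span {D.e a} ⊗[K] V a) a).symm ▸ zero
    | tmul r v =>
      rw [D.eq_smul_gen r, ← smul_top_eq_single]
      exact smul_top _ _ _
    | add s t hs ht =>
      exact (Pi.single_add (f := fun a => Ideal.span {D.e a} ⊗[K] V a) a s t).symm ▸ add _ _ hs ht
  rw [show x = ∑ a, (Pi.single a (x a) : ∀ a, Ideal.span {D.e a} ⊗[K] V a) from
    (Finset.univ_sum_single x).symm]
  exact Finset.sum_induction _ p add zero fun a _ => hsingle a _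

theorem coord_sum {b a : I} (h : D.arrow b a ≠ 0) (w : ∀ a, V a) :
    D.coord b a (∑ a, D.arrow b a • D.top a (w a)) = w a := by
  rw [map_sum, Finset.sum_eq_single a, D.coord_arrow_smul_top h]
  · exact fun a' _ h => D.coord_smul_top_of_ne b h _ _
  · simp

theorem sum_arrow_smul_congr {b : I} {w w' : ∀ a, V a} (h : ∀ a, D.Rel b a → w a = w' a)
    (hb : w b = w' b) :
    ∑ a, D.arrow b a • D.top a (w a) = ∑ a, D.arrow b a • D.top a (w' a) := by
  refine Finset.sum_congr rfl fun a _ => ?_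
  by_cases h0 : D.arrow b a = 0
  · rw [h0, zero_smul, zero_smul]
  · obtain rfl | hne := eq_or_ne b a
    · rw [hb]
    · rw [h a ⟨hne, h0⟩]

theorem e_smul_eq_sum (b : I) (x : D.Proj V) :
    D.e b • x = ∑ a, D.arrow b a • D.top a (D.coord b a x) := by
  induction x using proj_induction with
  | zero => simp
  | add x y hx hy => simp only [smul_add, hx, hy, map_add, Finset.sum_add_distrib]
  | smul_top r a v =>
    rw [Finset.sum_eq_single a]
    · rw [coord_smul_top, map_smul, smul_comm (D.arrow b a), ← smul_assoc (D.coeff b a r),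
        ← D.e_mul_mul_e, mul_smul, mul_smul, e_smul_top]
    · exact fun a' _ h => by rw [D.coord_smul_top_of_ne b h.symm, map_zero, smul_zero]
    · simp

theorem e_smul_sub_mem (b : I) (x : D.Proj V) :
    D.e b • x - D.top b (D.coord b b x) ∈ D.J • (⊤ : Submodule R (D.Proj V)) := by
  rw [e_smul_eq_sum, ← Finset.add_sum_erase _ _ (Finset.mem_univ b), D.arrow_self, e_smul_top,
    add_sub_cancel_left]
  exact Submodule.sum_mem _ fun a ha =>
    Submodule.smul_mem_smul (D.arrow_mem (Finset.ne_of_mem_erase ha).symm) trivial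

theorem coord_self_eq_zero_of_mem (a : I) {x : D.Proj V}
    (hx : x ∈ D.J • (⊤ : Submodule R (D.Proj V))) : D.coord a a x = 0 := by
  refine Submodule.smul_induction_on hx (fun j hj m hm => ?_) fun x y hx hy => by
    rw [map_add, hx, hy, add_zero]
  clear hm
  induction m using proj_induction with
  | zero => simp
  | add x y hx hy => rw [smul_add, map_add, hx, hy, add_zero]
  | smul_top r a' v =>
    rw [← mul_smul]
    obtain rfl | h := eq_or_ne a' a
    · rw [coord_smul_top, D.coeff_eq_zero_of_mem (D.J.mul_mem_right r hj), zero_smul]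
    · exact D.coord_smul_top_of_ne a h _ _

theorem le_smul_top_of_coord_self_eq_zero {N : Submodule R (D.Proj V)}
    (h : ∀ x ∈ N, ∀ b, D.coord b b x = 0) : N ≤ D.J • (⊤ : Submodule R (D.Proj V)) :=
  D.le_of_e_smul_mem fun x hx b => by simpa [h x hx b] using D.e_smul_sub_mem b x

section Lift

variable {M : Type} [AddCommGroup M] [Module R M]

theorem proj_hom_ext {f g : D.Proj V →ₗ[R] M} (h : ∀ a v, f (D.top a v) = g (D.top a v)) :
    f = g := by
  ext x
  induction x using proj_induction with
  | zero => simp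
  | add x y hx hy => rw [map_add, map_add, hx, hy]
  | smul_top r a v => rw [map_smul, map_smul, h]

variable [Module K M] [IsScalarTower K R M]

/-- The linear map on `D.Proj V` with prescribed values on the top; see `lift_top`. -/
def lift (h : ∀ a, V a →ₗ[K] M) : D.Proj V →ₗ[R] M :=
  LinearMap.lsum R (fun a => Ideal.span {D.e a} ⊗[K] V a) ℕ fun a =>
    TensorProduct.AlgebraTensorModule.lift
      (LinearMap.toSpanSingleton R (V a →ₗ[K] M) (h a) ∘ₗ (Ideal.span {D.e a}).subtype)

theorem lift_top (h : ∀ a, V a →ₗ[K] M) (a : I) (v : V a) :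
    D.lift h (D.top a v) = D.e a • h a v :=
  LinearMap.lsum_piSingle R (fun a => Ideal.span {D.e a} ⊗[K] V a) ℕ _ a (D.gen a ⊗ₜ[K] v)

end Lift

variable {W : I → Type} [∀ a, AddCommGroup (W a)] [∀ a, Module K (W a)]

/-- The map of projective modules induced by a family of linear maps between the tops. -/
def projMap (g : ∀ a, V a →ₗ[K] W a) : D.Proj V →ₗ[R] D.Proj W :=
  D.lift fun a => D.top a ∘ₗ g a

theorem projMap_top (g : ∀ a, V a →ₗ[K] W a) (a : I) (v : V a) :
    D.projMap g (D.top a v) = D.top a (g a v) :=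
  (D.lift_top _ a v).trans (D.e_smul_top a _)

end Proj

open BipartiteRep

variable {D} (U U' : BipartiteRep K D.Rel)

/-- The linear map of `U` between `b` and `a`, set to zero if there is no arrow. -/
def extendedMap (b a : I) : U.source b →ₗ[K] U.target a :=
  if h : D.Rel b a then U.map h else 0

theorem extendedMap_of_rel {b a : I} (h : D.Rel b a) : extendedMap U b a = U.map h := dif_pos h

theorem extendedMap_of_not_rel {b a : I} (h : ¬ D.Rel b a) : extendedMap U b a = 0 := dif_neg h

theorem extendedMap_self (b : I) : extendedMap U b b = 0 :=
  extendedMap_of_not_rel U fun h => h.1 rfl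

variable [Fintype I]

/-- The map of projectives presenting the module attached to `U`. -/
def presMap : D.Proj U.source →ₗ[R] D.Proj U.target :=
  D.lift fun b => ∑ a, DistribSMul.toLinearMap K (D.Proj U.target) (D.arrow b a) ∘ₗ
    D.top a ∘ₗ extendedMap U b a

/-- The module attached to a representation: the cokernel of `presMap U`.  Its top is given by the
target spaces of `U`, and, if `U` is source injective, its first syzygy by the source spaces. -/
abbrev Coker : Type := D.Proj U.target ⧸ LinearMap.range (presMap U)

/-- The projection of the projective with top `U.target` onto `Coker U`. -/
abbrev toCoker : D.Proj U.target →ₗ[R] Coker U := (LinearMap.range (presMap U)).mkQ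

theorem presMap_top (b : I) (u : U.source b) :
    presMap U (D.top b u) = ∑ a, D.arrow b a • D.top a (extendedMap U b a u) := by
  rw [presMap, lift_top, LinearMap.sum_apply, Finset.smul_sum]
  refine Finset.sum_congr rfl fun a _ => ?_
  change D.e b • D.arrow b a • D.top a (extendedMap U b a u) = _
  rw [smul_smul, D.e_mul_arrow]

theorem coord_presMap_top {b a : I} (h : D.Rel b a) (u : U.source b) :
    D.coord b a (presMap U (D.top b u)) = U.map h u := by
  rw [presMap_top, D.coord_sum h.2 fun a => extendedMap U b a u, extendedMap_of_rel U h]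

theorem presMap_mem (x : D.Proj U.source) :
    presMap U x ∈ D.J • (⊤ : Submodule R (D.Proj U.target)) := by
  induction x using proj_induction with
  | zero => rw [map_zero]; exact Submodule.zero_mem _
  | add x y hx hy => rw [map_add]; exact Submodule.add_mem _ hx hy
  | smul_top r b u =>
    rw [map_smul, presMap_top]
    refine Submodule.smul_mem _ _ (Submodule.sum_mem _ fun a _ => ?_)
    obtain rfl | h := eq_or_ne b a
    · simp [extendedMap_self]
    · exact Submodule.smul_mem_smul (D.arrow_mem h) trivial

theorem e_smul_presMap (b : I) (x : D.Proj U.source) :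
    D.e b • presMap U x = presMap U (D.top b (D.coord b b x)) := by
  rw [← sub_eq_zero, ← map_smul, ← map_sub]
  exact map_eq_zero_of_mem_smul_top D.J_mul_J _ (presMap_mem U) (D.e_smul_sub_mem b x)

variable {U} in
theorem ker_presMap_le (hU : U.IsSourceInjective) :
    LinearMap.ker (presMap U) ≤ D.J • (⊤ : Submodule R (D.Proj U.source)) := by
  refine D.le_smul_top_of_coord_self_eq_zero fun x hx b => hU b (funext fun a => ?_)
  rw [map_zero, toTargets_apply, ← coord_presMap_top U a.2, ← e_smul_presMap,
    LinearMap.mem_ker.1 hx, smul_zero, map_zero]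
  rfl

theorem toCoker_presMap (x : D.Proj U.source) : toCoker U (presMap U x) = 0 :=
  (Submodule.Quotient.mk_eq_zero _).2 ⟨x, rfl⟩

theorem exists_presMap_eq {y : D.Proj U.target} (h : toCoker U y = 0) : ∃ x, presMap U x = y :=
  (Submodule.Quotient.mk_eq_zero _).1 h

theorem exact_presMap_toCoker : Function.Exact (presMap U) (toCoker U) :=
  LinearMap.exact_map_mkQ_range _

theorem exists_toCoker_comp_eq {V : I → Type} [∀ a, AddCommGroup (V a)] [∀ a, Module K (V a)]
    (h : D.Proj V →ₗ[R] Coker U) : ∃ l : D.Proj V →ₗ[R] D.Proj U.target, toCoker U ∘ₗ l = h :=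
  Module.projective_lifting_property _ _ (Submodule.mkQ_surjective _)

theorem isProjPresentation_presMap [FiniteDimensional K R] :
    IsProjPresentation (presMap U) (toCoker U) where
  projective₁ := inferInstance
  projective₀ := inferInstance
  finite₁ := inferInstance
  finite₀ := inferInstance
  surjective := Submodule.mkQ_surjective _
  exact := exact_presMap_toCoker U

variable {U U'}

theorem coker_hom_ext {M : Type} [AddCommGroup M] [Module R M] {F F' : Coker U →ₗ[R] M}
    (h : ∀ a v, F (toCoker U (D.top a v)) = F' (toCoker U (D.top a v))) : F = F' :=
  Submodule.linearMap_qext _ (D.proj_hom_ext h)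

theorem subsingleton_target_of_subsingleton_coker (h : Subsingleton (Coker U)) (a : I) :
    Subsingleton (U.target a) := by
  refine subsingleton_of_forall_eq 0 fun v => ?_
  obtain ⟨x, hx⟩ := exists_presMap_eq U (Subsingleton.elim (toCoker U (D.top a v)) 0)
  rw [← D.coord_self_top a v, ← hx, D.coord_self_eq_zero_of_mem a (presMap_mem U x)]

theorem nontrivial_coker (hU : ¬ IsZero U) (hi : U.IsSourceInjective) : Nontrivial (Coker U) := by
  by_contra h
  have htarget := subsingleton_target_of_subsingleton_coker (not_nontrivial_iff_subsingleton.1 h)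
  exact hU (isZero_iff.2 ⟨fun a => (hi a).subsingleton, htarget⟩)

theorem projMap_comp_presMap (g : U ⟶ U') :
    D.projMap (onTarget g) ∘ₗ presMap U = presMap U' ∘ₗ D.projMap (onSource g) := by
  refine D.proj_hom_ext fun b u => ?_
  simp only [LinearMap.comp_apply, presMap_top, projMap_top, map_sum, map_smul]
  refine D.sum_arrow_smul_congr (fun a h => ?_) ?_
  · rw [extendedMap_of_rel U h, extendedMap_of_rel U' h, onTarget_map]
  · simp [extendedMap_self]

/-- The map of modules induced by a morphism of representations. -/
def cokerMap (g : U ⟶ U') : Coker U →ₗ[R] Coker U' :=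
  Submodule.mapQ _ _ (D.projMap (onTarget g)) <| by
    rintro _ ⟨x, rfl⟩
    exact ⟨_, (LinearMap.congr_fun (projMap_comp_presMap g) x).symm⟩

theorem cokerMap_top (g : U ⟶ U') (a : I) (v : U.target a) :
    cokerMap g (toCoker U (D.top a v)) = toCoker U' (D.top a (onTarget g a v)) :=
  congrArg (toCoker U') (D.projMap_top (onTarget g) a v)

theorem cokerMap_smul_id (c : K) : cokerMap (c • 𝟙 U) = scalarEnd (Coker U) c := by
  refine coker_hom_ext fun a v => ?_
  rw [cokerMap_top, onTarget_smul, onTarget_id, LinearMap.smul_apply, LinearMap.id_apply, map_smul,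
    scalarEnd_apply]
  exact ((toCoker U).map_smul_of_tower c _).trans (algebraMap_smul R c _).symm

variable (D) in
/-- The functor from representations to modules sending `U` to `Coker U`. -/
def functor : BipartiteRep K D.Rel ⥤ ModCat R where
  obj U := ModuleCat.of R (Coker U)
  map g := ModuleCat.ofHom (cokerMap g)
  map_id _ := ModuleCat.hom_ext (coker_hom_ext fun a v => cokerMap_top _ a v)
  map_comp f g := ModuleCat.hom_ext <| coker_hom_ext fun a v => by
    simp only [ModuleCat.hom_ofHom, ModuleCat.hom_comp, LinearMap.comp_apply, cokerMap_top,
      onTarget_comp]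

instance : (functor D).Additive where
  map_add {_ _ f g} := ModuleCat.hom_ext <| coker_hom_ext fun a v => by
    change cokerMap (f + g) _ = cokerMap f _ + cokerMap g _
    rw [cokerMap_top, cokerMap_top, cokerMap_top, onTarget_add, LinearMap.add_apply, map_add,
      map_add]

section Cover

variable (D) in
theorem exists_proj_cover {M : Type} [AddCommGroup M] [Module R M] [Module K M]
    [IsScalarTower K R M] [Module.Finite K M] :
    ∃ (V : I → Type) (_ : ∀ a, AddCommGroup (V a)) (_ : ∀ a, Module K (V a))
      (_ : ∀ a, FiniteDimensional K (V a)) (q : D.Proj V →ₗ[R] M), Function.Surjective q ∧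
        LinearMap.ker q ≤ D.J • ⊤ := by
  let eM (a : I) : Submodule K M := LinearMap.range (DistribSMul.toLinearMap K M (D.e a))
  let JM (a : I) : Submodule K (eM a) :=
    ((D.J • (⊤ : Submodule R M)).restrictScalars K).comap (eM a).subtype
  choose V hV using fun a => Submodule.exists_isCompl (JM a)
  let q := D.lift fun a => (eM a).subtype ∘ₗ (V a).subtype
  have hq (a : I) (v : V a) : q (D.top a v) = ((v : eM a) : M) := by
    obtain ⟨⟨_, m, rfl⟩, hv⟩ := v
    refine (D.lift_top _ a _).trans ?_
    change D.e a • D.e a • m = D.e a • m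
    rw [smul_smul, D.e_mul_e]
  refine ⟨fun a => V a, inferInstance, inferInstance, inferInstance, q, ?_, ?_⟩
  · have htop : ⊤ ≤ LinearMap.range q ⊔ D.J • ⊤ := D.le_of_e_smul_mem fun m _ a => by
      obtain ⟨w, hw, v, hv, hwv⟩ := Submodule.mem_sup.1
        ((hV a).sup_eq_top ▸ Submodule.mem_top : (⟨D.e a • m, m, rfl⟩ : eM a) ∈ JM a ⊔ V a)
      rw [show D.e a • m = v + w from (congrArg Subtype.val hwv).symm.trans (add_comm _ _)]
      exact Submodule.add_mem_sup ⟨D.top a ⟨v, hv⟩, hq a ⟨v, hv⟩⟩ hw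
    have hJ : D.J • ⊤ ≤ LinearMap.range q := Submodule.smul_le.2 fun j hj m _ => by
      obtain ⟨_, ⟨x, rfl⟩, z, hz, rfl⟩ := Submodule.mem_sup.1 (htop (x := m) trivial)
      rw [smul_add, smul_eq_zero_of_mem_smul_top D.J_mul_J hj hz, add_zero, ← map_smul]
      exact ⟨_, rfl⟩
    exact LinearMap.range_eq_top.1 (top_le_iff.1 (sup_eq_left.2 hJ ▸ htop))
  · refine D.le_smul_top_of_coord_self_eq_zero fun x hx a => ?_
    have hmem : ((D.coord a a x : V a) : eM a) ∈ JM a := by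
      have := map_mem_smul_top q (D.e_smul_sub_mem a x)
      rw [map_sub, map_smul, LinearMap.mem_ker.1 hx, smul_zero, zero_sub, hq] at this
      exact neg_mem_iff.1 this
    exact Subtype.ext (Submodule.disjoint_def.1 (hV a).disjoint _ hmem (D.coord a a x).2)

variable [FiniteDimensional K R]

variable (D) in
theorem hasProjectiveCovers : HasProjectiveCovers D.J := by
  intro N _ _ _
  let : Module K N := Module.compHom N (algebraMap K R)
  have : IsScalarTower K R N := .of_algebraMap_smul fun _ _ => rfl
  have : Module.Finite K N := .trans R N
  obtain ⟨V, _, _, _, q, hq, hker⟩ := D.exists_proj_cover (K := K) (M := N)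
  exact ⟨D.Proj V, inferInstance, inferInstance, q, inferInstance, inferInstance, hq, hker⟩

/-- The representation attached to a submodule `N` of a projective contained in its radical: the
source spaces are the `e b • N`. -/
abbrev repOfSubmodule {V : I → Type} [∀ a, AddCommGroup (V a)] [∀ a, Module K (V a)]
    [∀ a, FiniteDimensional K (V a)] (N : Submodule R (D.Proj V)) : BipartiteRep K D.Rel where
  source b := ↥(N.restrictScalars K ⊓
    LinearMap.ker (DistribSMul.toLinearMap K (D.Proj V) (D.e b) - LinearMap.id))
  target := V
  map {b a} _ := D.coord b a ∘ₗ Submodule.subtype _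

theorem presMap_repOfSubmodule_top {V : I → Type} [∀ a, AddCommGroup (V a)] [∀ a, Module K (V a)]
    [∀ a, FiniteDimensional K (V a)] {N : Submodule R (D.Proj V)} (hN : N ≤ D.J • ⊤) (b : I)
    (n : (repOfSubmodule N).source b) :
    presMap (repOfSubmodule N) (D.top b n) = (n : D.Proj V) := by
  have hn : D.e b • (n : D.Proj V) = n := sub_eq_zero.1 n.2.2
  rw [presMap_top, ← hn, D.e_smul_eq_sum b (n : D.Proj V)]
  refine D.sum_arrow_smul_congr (fun a h => by rw [extendedMap_of_rel _ h]; rfl) ?_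
  rw [extendedMap_self, D.coord_self_eq_zero_of_mem b (hN n.2.1), LinearMap.zero_apply]

theorem range_presMap_repOfSubmodule {V : I → Type} [∀ a, AddCommGroup (V a)]
    [∀ a, Module K (V a)] [∀ a, FiniteDimensional K (V a)] {N : Submodule R (D.Proj V)}
    (hN : N ≤ D.J • ⊤) : LinearMap.range (presMap (repOfSubmodule N)) = N := by
  apply le_antisymm
  · rintro _ ⟨x, rfl⟩
    induction x using proj_induction with
    | zero => exact (map_zero (presMap (repOfSubmodule N))).symm ▸ N.zero_mem
    | add x y hx hy => rw [map_add]; exact N.add_mem hx hy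
    | smul_top r b n =>
      rw [map_smul, presMap_repOfSubmodule_top hN b n]
      exact N.smul_mem _ n.2.1
  · refine D.le_of_e_smul_mem fun n hn b =>
      ⟨D.top b ⟨D.e b • n, N.smul_mem _ hn, ?_⟩, presMap_repOfSubmodule_top hN b _⟩
    change D.e b • D.e b • n - D.e b • n = 0
    rw [smul_smul, D.e_mul_e, sub_self]

variable (D) in
theorem exists_coker_equiv (M : Type) [AddCommGroup M] [Module R M] [Module.Finite R M] :
    ∃ U : BipartiteRep K D.Rel, Nonempty (Coker U ≃ₗ[R] M) := by
  let : Module K M := Module.compHom M (algebraMap K R)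
  have : IsScalarTower K R M := .of_algebraMap_smul fun _ _ => rfl
  have : Module.Finite K M := .trans R M
  obtain ⟨V, _, _, _, q, hq, hker⟩ := D.exists_proj_cover (K := K) (M := M)
  exact ⟨repOfSubmodule (LinearMap.ker q), ⟨Submodule.quotEquivOfEq _ _
    (range_presMap_repOfSubmodule hker) ≪≫ₗ q.quotKerEquivOfSurjective hq⟩⟩

end Cover

section Supported

variable {c : I → Bool} {s : Bool}

theorem homExtends_presMap (hU : U.IsRigid) (hs : IsSupportedOn c s U) :
    HomExtends (presMap U) (Coker U) := by
  intro h
  obtain ⟨l, rfl⟩ := exists_toCoker_comp_eq U h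
  obtain ⟨u, v, huv⟩ := hU fun b a _ => D.coord b a ∘ₗ l.restrictScalars K ∘ₗ D.top b
  have hl (b : I) (z : U.source b) : l (D.top b z) =
      presMap U (D.top b (u b z)) + D.projMap v (presMap U (D.top b z)) := by
    rw [← D.e_smul_top, map_smul, D.e_smul_eq_sum, D.e_smul_top]
    simp only [presMap_top, map_sum, map_smul, projMap_top, ← Finset.sum_add_distrib, ← smul_add,
      ← map_add]
    refine D.sum_arrow_smul_congr (fun a h => ?_) ?_
    · rw [extendedMap_of_rel U h]
      exact huv b a h z
    · by_cases hb : c b = s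
      · exact (hs.2 b hb).elim _ _
      · simp [(hs.1 b hb).elim z 0]
  refine ⟨toCoker U ∘ₗ D.projMap v, D.proj_hom_ext fun b z => ?_⟩
  rw [LinearMap.comp_apply (toCoker U) l, hl, map_add, toCoker_presMap, zero_add]
  rfl

theorem exists_eq_projMap (hs : IsSupportedOn c s U) (hs' : IsSupportedOn c s U')
    (hc : ∀ b a, D.Rel b a → c b ≠ c a) (l : D.Proj U.target →ₗ[R] D.Proj U'.target) :
    ∃ g, l = D.projMap g := by
  refine ⟨fun a => D.coord a a ∘ₗ l.restrictScalars K ∘ₗ D.top a, D.proj_hom_ext fun a v => ?_⟩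
  rw [projMap_top, ← D.e_smul_top, map_smul, D.e_smul_eq_sum, Finset.sum_eq_single a]
  · rw [D.arrow_self, D.e_smul_top]
    rfl
  · intro a' _ hne
    by_cases h0 : D.arrow a a' = 0
    · rw [h0, zero_smul]
    by_cases h : c a = s
    · simp [(hs.2 a h).elim v 0]
    · have h' : c a' = s :=
        (Bool.eq_not.2 (hc a a' ⟨hne.symm, h0⟩).symm).trans (Bool.eq_not.2 (Ne.symm h)).symm
      rw [(hs'.2 a' h').elim (D.coord a a' _) 0, map_zero, smul_zero]
  · simp

theorem exists_onSource_of_toCoker_projMap_eq_zero {g : ∀ a, U.target a →ₗ[K] U'.target a}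
    (hg : ∀ x, toCoker U' (D.projMap g (presMap U x)) = 0) (b : I) :
    ∃ x : U.source b →ₗ[K] U'.source b, ∀ u a (h : D.Rel b a),
      g a (U.map h u) = U'.map h (x u) := by
  let p := LinearMap.pi fun a : {a // D.Rel b a} => U'.map a.2
  let h := LinearMap.pi fun a : {a // D.Rel b a} => g a ∘ₗ U.map a.2
  have hle (u : U.source b) : h u ∈ LinearMap.range p := by
    obtain ⟨x, hx⟩ := exists_presMap_eq U' (hg (D.top b u))
    refine ⟨D.coord b b x, funext fun a => ?_⟩
    change U'.map a.2 (D.coord b b x) = g a (U.map a.2 u)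
    rw [← coord_presMap_top U' a.2, ← e_smul_presMap, hx, ← map_smul, ← map_smul, e_smul_top,
      presMap_top, map_sum]
    simp only [map_smul, projMap_top]
    rw [D.coord_sum a.2.2 fun a => g a (extendedMap U b a u), extendedMap_of_rel U a.2]
  obtain ⟨x, hx⟩ := exists_lift_of_exact p.exact_map_mkQ_range h
    (LinearMap.ext fun u => (Submodule.Quotient.mk_eq_zero _).2 (hle u))
  exact ⟨x, fun u a hab => (congrFun (LinearMap.congr_fun hx u) ⟨a, hab⟩).symm⟩

theorem cokerMap_surjective (hs : IsSupportedOn c s U) (hs' : IsSupportedOn c s U')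
    (hc : ∀ b a, D.Rel b a → c b ≠ c a) (F : Coker U →ₗ[R] Coker U') :
    ∃ g : U ⟶ U', cokerMap g = F := by
  obtain ⟨l, hl⟩ := exists_toCoker_comp_eq U' (F ∘ₗ toCoker U)
  obtain ⟨g, rfl⟩ := exists_eq_projMap hs hs' hc l
  have hmap (u : D.Proj U.source) : toCoker U' (D.projMap g (presMap U u)) = 0 := by
    rw [← LinearMap.comp_apply, hl, LinearMap.comp_apply, toCoker_presMap, map_zero]
  choose x hx using exists_onSource_of_toCoker_projMap_eq_zero hmap
  refine ⟨mkHom x g fun b a h u => hx b u a h, coker_hom_ext fun a v => ?_⟩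
  rw [cokerMap_top, onTarget_mkHom, ← projMap_top]
  exact LinearMap.congr_fun hl _

end Supported

end RadSqZeroData

/-! ### The dichotomy for preprojective representations -/

section FiniteType

open BipartiteRep RadSqZeroData Filter

theorem IsIndecMod.hasTrivialIdempotents {M : ModCat R} (hM : IsIndecMod M) :
    HasTrivialIdempotents M := by
  refine ⟨hM.1, fun p hp => ?_⟩
  have hidem : IsIdempotentElem p.hom := congrArg ModuleCat.Hom.hom hp
  have e := Submodule.prodEquivOfIsCompl _ _ (LinearMap.IsIdempotentElem.isCompl hidem)
  let iso : M ≅ ModuleCat.of R (LinearMap.range p.hom) ⊞ ModuleCat.of R (LinearMap.ker p.hom) :=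
    e.symm.toModuleIso ≪≫ (ModuleCat.biprodIsoProd (.of R _) (.of R _)).symm
  refine (hM.2 _ _ ⟨iso⟩).imp (fun h => ?_) fun h => ?_
  · exact ModuleCat.hom_ext <| LinearMap.range_eq_bot.1 <|
      Submodule.subsingleton_iff_eq_bot.1 (ModuleCat.isZero_iff_subsingleton.1 h)
  · have hinj := LinearMap.ker_eq_bot.1 <|
      Submodule.subsingleton_iff_eq_bot.1 (ModuleCat.isZero_iff_subsingleton.1 h)
    exact ModuleCat.hom_ext <| LinearMap.ext fun x => hinj (LinearMap.congr_fun hidem x)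

theorem exists_comp_ne_zero_of_isArtinian {M : Type} [AddCommGroup M] [Module R M] [IsArtinian R M]
    {X : ℕ → Type} [∀ k, AddCommGroup (X k)] [∀ k, Module R (X k)] [∀ k, Nontrivial (X k)]
    {i : ∀ k, X k →ₗ[R] M} {p : ∀ k, M →ₗ[R] X k} (h : ∀ k, p k ∘ₗ i k = LinearMap.id) :
    ∃ l k, l < k ∧ p l ∘ₗ i k ≠ 0 := by
  by_contra! hzero
  refine not_strictAnti_of_wellFoundedLT (fun m => ⨅ l < m, LinearMap.ker (p l))
    (strictAnti_nat_of_succ_lt fun m => SetLike.lt_iff_le_and_exists.2 ⟨?_, ?_⟩)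
  · exact biInf_mono fun l hl => hl.trans m.lt_succ_self
  · obtain ⟨x, hx⟩ := exists_ne (0 : X m)
    refine ⟨i m x, ?_, fun hmem => hx ?_⟩
    · simp only [Submodule.mem_iInf]
      exact fun l hl => LinearMap.congr_fun (hzero l m hl) x
    · simp only [Submodule.mem_iInf] at hmem
      exact (LinearMap.congr_fun (h m) x).symm.trans (hmem m m.lt_succ_self)

variable {K : Type} [Field K] {I : Type} [Fintype I]

theorem exists_hasTrivialIdempotents_iso {E : I → I → Prop} {C : Type w} [Category.{v} C]
    [Preadditive C] (F : BipartiteRep K E ⥤ C) [F.Additive] {M : C} (hM : HasTrivialIdempotents M)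
    (hex : ∃ U, Nonempty (F.obj U ≅ M)) :
    ∃ U, HasTrivialIdempotents U ∧ Nonempty (F.obj U ≅ M) := by
  -- Idempotents of a representation of minimal total dimension that survive in `C` are identities.
  obtain ⟨U, ⟨e⟩, hmin⟩ := exists_minimalFor_of_wellFoundedLT _ totalDim hex
  have hFU : HasTrivialIdempotents (F.obj U) := hM.of_iso e.symm
  have key (g : U ⟶ U) (hg : g ≫ g = g) (h : F.map g ≠ 0) : g = 𝟙 U := by
    have hz : ¬ IsZero (F.obj (rangeRep g)) := fun hz => h <| by
      rw [← retractRangeRep_r_i g hg, F.map_comp, hz.eq_of_tgt (F.map _) 0, zero_comp]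
    obtain ⟨e'⟩ := hFU.nonempty_iso_of_retract hz ((retractRangeRep g hg).map F)
    exact eq_id_of_totalDim_le_totalDim_rangeRep hg
      ((le_total _ _).elim id (hmin ⟨e'.symm ≪≫ e⟩))
  refine ⟨U, ⟨fun h => hFU.1 (F.map_isZero h), fun g hg => ?_⟩, ⟨e⟩⟩
  refine or_iff_not_imp_right.2 fun hne => ?_
  have h0 : F.map g = 0 := not_not.1 (mt (key g hg) hne)
  have h1 : 𝟙 U - g = 𝟙 U := by
    refine key _ (by simp [hg]) ?_
    rw [F.map_sub, h0, sub_zero, F.map_id]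
    exact mt (IsZero.iff_id_eq_zero _).2 hFU.1
  simpa using h1

variable [Algebra K R] (D : RadSqZeroData K R I)

variable {D} in
theorem comp_eq_zero_of_preprojective {c : I → Bool} {s : Bool}
    (hc : ∀ b a, D.Rel b a → c b ≠ c a) {k l : ℕ} {v w : I} (hkl : k < l)
    (hz : ¬ IsZero (preprojective K k D.Rel v))
    (hk : IsSupportedOn c s (preprojective K k D.Rel v))
    (hl : IsSupportedOn c s (preprojective K l D.Rel w))
    (F : Coker (preprojective K l D.Rel w) →ₗ[R] Coker (preprojective K k D.Rel v)) : F = 0 := by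
  obtain ⟨g, rfl⟩ := cokerMap_surjective hl hk hc F
  rw [preprojective_hom_eq_zero k D.Rel hkl hz g]
  exact congrArg ModuleCat.Hom.hom ((functor D).map_zero _ _)

variable [FiniteDimensional K R]

theorem isRepFiniteRing_of_isZero_preprojective {N : ℕ}
    (hN : ∀ k ≥ N, ∀ v, IsZero (preprojective K k D.Rel v)) : IsRepFiniteRing R := by
  let ι := Fintype.equivFin (Fin N × I)
  refine ⟨_, fun i => (functor D).obj (preprojective K (ι.symm i).1 D.Rel (ι.symm i).2),
    fun M hfg hM => ?_⟩
  have : Module.Finite R M := hfg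
  obtain ⟨U, hU, ⟨e⟩⟩ := exists_hasTrivialIdempotents_iso (functor D) hM.hasTrivialIdempotents <|
    (D.exists_coker_equiv M).imp fun U => Nonempty.map LinearEquiv.toModuleIso
  obtain ⟨j, v, ⟨e'⟩⟩ := exists_iso_preprojective N D.Rel hU
    (fun v _ => (hN N le_rfl v).eq_of_src _ _) fun v _ => (hN (N + 1) N.le_succ v).eq_of_src _ _
  have hj : j < N := lt_of_not_ge fun h => hU.1 ((hN j h v).of_iso e')
  refine ⟨ι (⟨j, hj⟩, v), ?_⟩
  simp only [Equiv.symm_apply_apply]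
  exact ⟨e.symm ≪≫ (functor D).mapIso e'⟩

variable {D} in
theorem exists_isSupportTauTiltingMod_isSummand_coker {c : I → Bool} {s : Bool}
    (hc : ∀ b a, D.Rel b a → c b ≠ c a) {U : BipartiteRep K D.Rel} (hz : ¬ IsZero U)
    (hU : HasScalarEnds K U) (hrigid : U.IsRigid) (hinj : U.IsSourceInjective)
    (hs : IsSupportedOn c s U) :
    ∃ T : ModCat R, IsSupportTauTiltingMod T ∧ IsBasicMod T ∧ IsFGMod T ∧
      IsSummand R (Coker U) T := by
  have : IsArtinianRing R := .of_finite K R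
  have := nontrivial_coker hz hinj
  refine exists_isSupportTauTiltingMod_isSummand K D.J_mul_J D.hasProjectiveCovers
    (isProjPresentation_presMap U) (ker_presMap_le hinj) (homExtends_presMap hrigid hs) fun u => ?_
  obtain ⟨g, rfl⟩ := cokerMap_surjective hs hs hc u
  obtain ⟨x, rfl⟩ := hU g
  exact ⟨x, cokerMap_smul_id x⟩

variable {D} in
theorem exists_isSummand_coker_preprojective {c : I → Bool} (hc : ∀ b a, D.Rel b a → c b ≠ c a)
    {n : ℕ} {f : Fin n → ModCat R}
    (hf : ∀ M, IsSupportTauTiltingMod M → IsBasicMod M → ∃ i, Nonempty (M ≅ f i)) {k : ℕ} {v : I}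
    (hz : ¬ IsZero (preprojective K (k + 2) D.Rel v)) :
    ∃ x : Fin n × Bool, IsSupportedOn c x.2 (preprojective K k D.Rel v) ∧ IsFGMod (f x.1) ∧
      IsSummand R (Coker (preprojective K k D.Rel v)) (f x.1) := by
  have hz₁ := mt isZero_preprojective_succ hz
  have hz₀ := mt isZero_preprojective_succ hz₁
  obtain ⟨s, hs⟩ := exists_isSupportedOn_preprojective (K := K) c k D.Rel v hc
  obtain ⟨T, hT, hbasic, hfg, hsummand⟩ := exists_isSupportTauTiltingMod_isSummand_coker hc hz₀
    (hasScalarEnds_preprojective k D.Rel v hz₀) (isRigid_preprojective k D.Rel v)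
    (isSourceInjective_preprojective hz₁) hs
  obtain ⟨i, ⟨e⟩⟩ := hf T hT hbasic
  have : Module.Finite R T := hfg
  exact ⟨(i, s), hs, .equiv e.toLinearEquiv, hsummand.trans (.of_equiv e.toLinearEquiv)⟩

theorem eventually_isZero_preprojective {c : I → Bool} (hc : ∀ b a, D.Rel b a → c b ≠ c a)
    (ht : IsTauTiltingFiniteRing R) :
    ∀ᶠ k in atTop, ∀ v, IsZero (preprojective K k D.Rel v) := by
  by_contra h
  rw [← map_add_atTop_eq_nat 2, eventually_map, not_eventually] at h
  obtain ⟨n, f, hf⟩ := ht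
  -- Infinitely many preprojectives on the same side of the quiver give summands of the same `f i`.
  have hfreq : ∃ᶠ k in atTop, ∃ x : Fin n × Bool, ∃ v,
      ¬ IsZero (preprojective K (k + 2) D.Rel v) ∧
      IsSupportedOn c x.2 (preprojective K k D.Rel v) ∧ IsFGMod (f x.1) ∧
      IsSummand R (Coker (preprojective K k D.Rel v)) (f x.1) := h.mono fun k hk => by
    obtain ⟨v, hv⟩ := not_forall.1 hk
    exact (exists_isSummand_coker_preprojective hc hf hv).imp fun x hx => ⟨v, hv, hx⟩
  obtain ⟨⟨i, s⟩, hfreq⟩ := frequently_exists.1 hfreq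
  obtain ⟨φ, hφ, hP⟩ := extraction_of_frequently_atTop hfreq
  choose v hz hs hfg hsummand using hP
  choose ι π hπι using hsummand
  have hz₁ (m : ℕ) := mt isZero_preprojective_succ (hz m)
  have hz₀ (m : ℕ) := mt isZero_preprojective_succ (hz₁ m)
  have (m : ℕ) := nontrivial_coker (D := D) (hz₀ m) (isSourceInjective_preprojective (hz₁ m))
  have : IsArtinianRing R := .of_finite K R
  have : Module.Finite R (f i) := hfg 0
  obtain ⟨l, k, hlk, hne⟩ := exists_comp_ne_zero_of_isArtinian hπι
  exact hne (comp_eq_zero_of_preprojective hc (hφ hlk) (hz₀ l) (hs l) (hs k) _)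

theorem isRepFiniteRing_of_isTauTiltingFiniteRing {c : I → Bool}
    (hc : ∀ b a, D.Rel b a → c b ≠ c a) (ht : IsTauTiltingFiniteRing R) : IsRepFiniteRing R := by
  obtain ⟨N, hN⟩ := eventually_atTop.1 (eventually_isZero_preprojective D hc ht)
  exact isRepFiniteRing_of_isZero_preprojective D hN

end FiniteType

/-! ### Radicals and primitive idempotents -/

section Presentation

open Polynomial

variable {Λ : Type} [Ring Λ]

theorem inRad_iff_mem_jacobson {x : Λ} : InRad Λ x ↔ x ∈ Ring.jacobson Λ := by
  rw [← Ideal.jacobson_bot, Ideal.mem_jacobson_iff]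
  simp only [Ideal.mem_bot, sub_eq_zero]
  refine ⟨fun h y => ?_, fun h y => ?_⟩
  · obtain ⟨z, hz⟩ := (h (-y)).exists_left_inv
    exact ⟨z, by rw [← hz]; noncomm_ring⟩
  · obtain ⟨z, hz⟩ := h (-y)
    obtain ⟨w, hw⟩ := h (z * y)
    have hzy : z * (1 - y * x) = 1 := Eq.trans (by noncomm_ring) hz
    have hwz : w * z = 1 := by
      calc w * z = w * (z * (1 - y * x) + z * y * x) := by noncomm_ring
        _ = w * (z * y) * x + w := by rw [hzy]; noncomm_ring
        _ = 1 := hw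
    exact ⟨⟨1 - y * x, z, left_inv_eq_right_inv hwz hzy ▸ hwz, hzy⟩, rfl⟩

/-- The Jacobson radical of `Λ`, as an ideal of the opposite ring. -/
def opRadical (Λ : Type) [Ring Λ] : Ideal Λᵐᵒᵖ :=
  TwoSidedIdeal.asIdeal (Ring.jacobson Λ).toTwoSided.op

instance : (opRadical Λ).IsTwoSided :=
  inferInstanceAs (TwoSidedIdeal.asIdeal _).IsTwoSided

theorem mem_opRadical {x : Λᵐᵒᵖ} : x ∈ opRadical Λ ↔ InRad Λ x.unop := by
  rw [opRadical, TwoSidedIdeal.mem_asIdeal, TwoSidedIdeal.mem_op_iff, Ideal.mem_toTwoSided,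
    inRad_iff_mem_jacobson]

theorem RadSqZero.opRadical_mul_self (hrad : RadSqZero Λ) : opRadical Λ * opRadical Λ = ⊥ :=
  eq_bot_iff.2 <| Ideal.mul_le.2 fun x hx y hy =>
    MulOpposite.unop_injective (hrad y.unop x.unop (mem_opRadical.1 hy) (mem_opRadical.1 hx))

theorem RadSqZero.inRadSq_iff (hrad : RadSqZero Λ) {x : Λ} : InRadSq Λ x ↔ x = 0 := by
  have hzero : {z : Λ | ∃ a b : Λ, InRad Λ a ∧ InRad Λ b ∧ z = a * b} ⊆ (⊥ : AddSubgroup Λ) := by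
    rintro _ ⟨a, b, ha, hb, rfl⟩
    exact hrad a b ha hb
  rw [InRadSq, eq_bot_iff.2 ((AddSubgroup.closure_le _).2 hzero), AddSubgroup.mem_bot]

theorem isNilpotent_mul_comm {a b : Λ} (h : IsNilpotent (a * b)) : IsNilpotent (b * a) := by
  obtain ⟨n, hn⟩ := h
  have hsemi : SemiconjBy b (a * b) (b * a) := (mul_assoc b a b).symm
  refine ⟨n + 1, ?_⟩
  rw [pow_succ, ← mul_assoc, ← (hsemi.pow_right n).eq, hn, mul_zero, zero_mul]

theorem inRad_of_forall_isNilpotent {x : Λ} (h : ∀ r, IsNilpotent (r * x)) : InRad Λ x :=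
  fun r => (h r).isUnit_one_sub

theorem IsPrimitiveIdem.eq_zero_or_eq {e f : Λ} (he : IsPrimitiveIdem Λ e)
    (hf : IsIdempotentElem f) (hef : e * f = f) (hfe : f * e = f) : f = 0 ∨ f = e := by
  have hsub : IsIdempotentElem (e - f) := by
    simp only [IsIdempotentElem, mul_sub, sub_mul, he.1.eq, hf.eq, hef, hfe, sub_self, sub_zero]
  refine (he.2.2 f (e - f) hf hsub ?_ ?_ (add_sub_cancel f e)).imp_right fun h => ?_
  · rw [mul_sub, hfe, hf.eq, sub_self]
  · rw [sub_mul, hef, hf.eq, sub_self]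
  · exact (sub_eq_zero.1 h).symm

variable {K : Type} [Field K] [Algebra K Λ]

theorem exists_commute_pow_eq_mul_pow_mul_pow {y : Λ} (hy : IsIntegral K y) :
    ∃ k w, Commute w y ∧ y ^ (k + 1) = w * y ^ (k + 1) * y ^ (k + 1) := by
  obtain ⟨q, hq, hndvd⟩ := exists_eq_pow_rootMultiplicity_mul_and_not_dvd (minpoly K y)
    (minpoly.ne_zero hy) 0
  generalize (minpoly K y).rootMultiplicity 0 = k at hq
  rw [C_0, sub_zero] at hq hndvd
  obtain ⟨a, b, hab⟩ : IsCoprime ((X : K[X]) ^ (k + 1)) q :=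
    (prime_X.coprime_iff_not_dvd.2 hndvd).pow_left
  have hX : (X : K[X]) ^ (k + 1) = a * X ^ (k + 1) * X ^ (k + 1) + X * b * minpoly K y := by
    rw [hq]
    linear_combination -(X : K[X]) ^ (k + 1) * hab
  refine ⟨k, aeval y a, ?_, by simpa using congrArg (aeval y) hX⟩
  simpa using (Commute.all a X).map (aeval y)

theorem IsPrimitiveIdem.isNilpotent_or_exists_mul_eq (K : Type) [Field K] [Algebra K Λ]
    [FiniteDimensional K Λ] {e y : Λ} (he : IsPrimitiveIdem Λ e) (hey : e * y = y)
    (hye : y * e = y) : IsNilpotent y ∨ ∃ z, z * y = e := by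
  obtain ⟨k, w, hwy, hk⟩ :=
    exists_commute_pow_eq_mul_pow_mul_pow (Algebra.IsIntegral.isIntegral (R := K) y)
  have hcomm : w * y ^ (k + 1) = y ^ (k + 1) * w := (hwy.pow_right _).eq
  have hidem : IsIdempotentElem (w * y ^ (k + 1)) := by
    rw [IsIdempotentElem, mul_assoc w, ← mul_assoc _ w, ← hcomm, ← hk]
  have hef : e * (w * y ^ (k + 1)) = w * y ^ (k + 1) := by
    rw [hcomm, pow_succ', ← mul_assoc, ← mul_assoc, hey]
  have hfe : w * y ^ (k + 1) * e = w * y ^ (k + 1) := by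
    rw [pow_succ, mul_assoc, mul_assoc, hye]
  refine (he.eq_zero_or_eq hidem hef hfe).imp (fun h => ⟨k + 1, ?_⟩) fun h => ⟨w * y ^ k, ?_⟩
  · rw [hk, h, zero_mul]
  · rw [mul_assoc, ← pow_succ, h]

theorem IsPrimitiveIdem.inRad_of_isNilpotent (K : Type) [Field K] [Algebra K Λ]
    [FiniteDimensional K Λ] {e y : Λ} (he : IsPrimitiveIdem Λ e) (hey : e * y = y)
    (hye : y * e = y) (hy : IsNilpotent y) : InRad Λ y := by
  refine inRad_of_forall_isNilpotent fun r => ?_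
  rw [← hye, ← mul_assoc]
  refine isNilpotent_mul_comm ((he.isNilpotent_or_exists_mul_eq K ?_ ?_).resolve_right ?_)
  · rw [← mul_assoc, he.1.eq]
  · simp only [mul_assoc, hye]
  rintro ⟨z, hz⟩
  set t := z * (e * r) with ht
  have hty : t * y = e := by simpa only [ht, mul_assoc] using hz
  obtain ⟨m, hm⟩ := hy
  have hpow (m : ℕ) : t ^ m * y ^ (m + 1) = y := by
    induction m with
    | zero => simp
    | succ m ih =>
      calc t ^ (m + 1) * y ^ (m + 1 + 1) = t ^ m * (t * y * y) * y ^ m := by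
            simp only [pow_succ t, pow_succ' y, mul_assoc]
        _ = t ^ m * y ^ (m + 1) := by rw [hty, hey, mul_assoc, pow_succ']
        _ = y := ih
  refine he.2.1 ?_
  rw [← hty, ← hpow m, pow_succ, hm]
  simp

theorem IsPrimitiveIdem.exists_mul_mul_eq_smul [IsAlgClosed K] [FiniteDimensional K Λ] {e : Λ}
    (he : IsPrimitiveIdem Λ e) (hrad : ∀ x, InRad Λ x → e * x * e = 0) (r : Λ) :
    ∃ c : K, e * r * e = c • e := by
  have hee : e * e = e := he.1
  let V : Submodule K Λ := LinearMap.range (LinearMap.mulLeft K e)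
  have hV (x : Λ) (hx : x ∈ V) : e * x = x := by
    obtain ⟨w, rfl⟩ := hx
    simp only [LinearMap.mulLeft_apply, ← mul_assoc, hee]
  let T : V →ₗ[K] V := (LinearMap.mulLeft K (e * r)).restrict fun x _ =>
    ⟨r * x, by simp only [LinearMap.mulLeft_apply, mul_assoc]⟩
  have : Nontrivial V := ⟨⟨⟨e, e, hee⟩, 0, fun h => he.2.1 (congrArg Subtype.val h)⟩⟩
  obtain ⟨c, hc⟩ := Module.End.exists_eigenvalue T
  obtain ⟨⟨v, hvV⟩, hv⟩ := hc.exists_hasEigenvector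
  have hrv : e * r * v = c • v := congrArg Subtype.val hv.apply_eq_smul
  have hv0 : v ≠ 0 := fun h => hv.2 (Subtype.ext h)
  set y := e * r * e - c • e with hy
  have hey : e * y = y := by rw [hy, mul_sub, ← mul_assoc, ← mul_assoc, hee, mul_smul_comm, hee]
  have hye : y * e = y := by rw [hy, sub_mul, mul_assoc, hee, smul_mul_assoc, hee]
  have hyv : y * v = 0 := by
    rw [hy, sub_mul, mul_assoc, hV v hvV, hrv, smul_mul_assoc, hV v hvV, sub_self]
  have hnil : IsNilpotent y := (he.isNilpotent_or_exists_mul_eq K hey hye).resolve_right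
    fun ⟨z, hz⟩ => hv0 <| by rw [← hV v hvV, ← hz, mul_assoc, hyv, mul_zero]
  have hzero := hrad y (he.inRad_of_isNilpotent K hey hye hnil)
  rw [hey, hye] at hzero
  exact ⟨c, sub_eq_zero.1 hzero⟩

/-! ### A presentation of the opposite basic algebra -/

theorem inRad_of_minimal_span_eq_top {ι : Type*} {e : ι → Λ} {S : Finset ι}
    (hS : Minimal (fun S : Finset ι => TwoSidedIdeal.span (e '' S) = ⊤) S)
    (hscalar : ∀ i r, ∃ c : K, e i * r * e i = c • e i) {i j : ι} (hi : i ∈ S) (hj : j ∈ S)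
    (hij : i ≠ j) (x : Λ) : InRad Λ (e i * x * e j) := by
  classical
  refine inRad_of_forall_isNilpotent fun r => ?_
  suffices h : e j * (r * e i * x) * e j = 0 from ⟨2, by
    rw [sq, mul_assoc r, show e i * x * e j * (r * (e i * x * e j)) =
      e i * x * (e j * (r * e i * x) * e j) by simp only [mul_assoc], h, mul_zero, mul_zero]⟩
  obtain ⟨c, hc⟩ := hscalar j (r * e i * x)
  rw [hc]
  by_contra hne
  have hc0 : c ≠ 0 := left_ne_zero_of_smul hne
  -- Otherwise `e j` lies in the ideal generated by `e i` and `S` was not minimal.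
  set T := TwoSidedIdeal.span (e '' (S.erase j : Finset ι))
  have hiT : e i ∈ T := TwoSidedIdeal.subset_span ⟨i, Finset.mem_erase.2 ⟨hij, hi⟩, rfl⟩
  have hjT : e j ∈ T := by
    have hej : e j = c⁻¹ • e j * r * e i * (x * e j) := by
      calc e j = c⁻¹ • (e j * (r * e i * x) * e j) := ((inv_smul_eq_iff₀ hc0).2 hc).symm
        _ = _ := by simp only [smul_mul_assoc, mul_assoc]
    rw [hej]
    exact T.mul_mem_right _ _ (T.mul_mem_left _ _ hiT)
  refine Finset.notMem_erase j S (hS.2 (top_le_iff.1 ?_) (Finset.erase_subset j S) hj)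
  rw [← hS.1, TwoSidedIdeal.span_le]
  rintro _ ⟨k, hk, rfl⟩
  obtain rfl | hkj := eq_or_ne k j
  · exact hjT
  · exact TwoSidedIdeal.subset_span ⟨k, Finset.mem_erase.2 ⟨hkj, hk⟩, rfl⟩

theorem op_span_eq_top {ι : Type*} {e : ι → Λ} {S : Finset ι}
    (hS : TwoSidedIdeal.span (e '' S) = ⊤) :
    TwoSidedIdeal.span (Set.range fun i : S => MulOpposite.op (e i)) = ⊤ := by
  have hle : TwoSidedIdeal.span (e '' S) ≤
      (TwoSidedIdeal.span (Set.range fun i : S => MulOpposite.op (e i))).unop := by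
    rw [TwoSidedIdeal.span_le]
    rintro _ ⟨i, hi, rfl⟩
    exact TwoSidedIdeal.mem_unop_iff.2 (TwoSidedIdeal.subset_span ⟨⟨i, hi⟩, rfl⟩)
  rw [← TwoSidedIdeal.one_mem_iff]
  exact TwoSidedIdeal.mem_unop_iff.1 (hle (hS ▸ TwoSidedIdeal.mem_top Λ))

variable {n : ℕ} {e : Fin n → Λ}

theorem exists_forall_mul_mul_eq_smul (hmult : ArrowMultLE1 Λ K e) (hrad : RadSqZero Λ)
    {i j : Fin n} (hi : e i * e i = e i) (hj : e j * e j = e j)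
    (hij : ∀ r, InRad Λ (e i * r * e j)) :
    ∃ x, ∀ r, ∃ c : K, e i * r * e j = c • (e i * x * e j) := by
  by_cases h : ∃ x, e i * x * e j ≠ 0
  · obtain ⟨x, hx⟩ := h
    refine ⟨x, fun r => ?_⟩
    obtain ⟨a, b, hab, h⟩ := hmult i j _ _ (hij x) (hij r)
    have hidem (r : Λ) : e i * (e i * r * e j) * e j = e i * r * e j := by
      rw [← mul_assoc, ← mul_assoc, hi, mul_assoc, hj]
    rw [hrad.inRadSq_iff, hidem, hidem] at h
    have hb : b ≠ 0 := by
      rintro rfl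
      rw [zero_smul, add_zero] at h
      exact hx ((smul_eq_zero.1 h).resolve_left (hab.resolve_right (not_not.2 rfl)))
    refine ⟨b⁻¹ * -a, ?_⟩
    rw [mul_smul, eq_inv_smul_iff₀ hb, neg_smul, eq_neg_iff_add_eq_zero, add_comm, h]
  · push Not at h
    exact ⟨0, fun r => ⟨0, by rw [h, zero_smul]⟩⟩

theorem IsCompletePrimitiveFamily.span_range_eq_top (he : IsCompletePrimitiveFamily Λ e) :
    TwoSidedIdeal.span (Set.range e) = ⊤ := by
  rw [← TwoSidedIdeal.one_mem_iff, ← he.2.2]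
  exact sum_mem fun i _ => TwoSidedIdeal.subset_span ⟨i, rfl⟩

theorem IsCompletePrimitiveFamily.exists_span_eq_top_forall_inRad
    (he : IsCompletePrimitiveFamily Λ e) (hscalar : ∀ i r, ∃ c : K, e i * r * e i = c • e i) :
    ∃ S : Finset (Fin n), TwoSidedIdeal.span (e '' S) = ⊤ ∧
      ∀ i j : S, i ≠ j → ∀ x, InRad Λ (e i * x * e j) := by
  obtain ⟨S, hS⟩ := exists_minimal_of_wellFoundedLT
    (fun S : Finset (Fin n) => TwoSidedIdeal.span (e '' S) = ⊤)
    ⟨Finset.univ, by simpa using he.span_range_eq_top⟩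
  exact ⟨S, hS.1, fun i j hij =>
    inRad_of_minimal_span_eq_top hS hscalar i.2 j.2 (Subtype.coe_ne_coe.2 hij)⟩

theorem exists_radSqZeroData [IsAlgClosed K] [FiniteDimensional K Λ]
    (he : IsCompletePrimitiveFamily Λ e) (hloop : ∀ i, ¬ HasArrow Λ e i i)
    (hmult : ArrowMultLE1 Λ K e) (hrad : RadSqZero Λ) :
    ∃ (S : Finset (Fin n)) (D : RadSqZeroData K Λᵐᵒᵖ S),
      ∀ b a, D.Rel b a → HasArrow Λ e a b := by
  have hee (i : Fin n) : e i * e i = e i := (he.1 i).1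
  have hcorner (i : Fin n) (x : Λ) (hx : InRad Λ x) : e i * x * e i = 0 :=
    by_contra fun h => hloop i ⟨x, hx, mt hrad.inRadSq_iff.1 h⟩
  have hscalar (i : Fin n) (r : Λ) : ∃ c : K, e i * r * e i = c • e i :=
    (he.1 i).exists_mul_mul_eq_smul (hcorner i) r
  obtain ⟨S, hS, hoff⟩ := he.exists_span_eq_top_forall_inRad hscalar
  have hx (i j : S) :
      ∃ x, (i = j → x = 1) ∧ ∀ r, ∃ c : K, e i * r * e j = c • (e i * x * e j) := by
    obtain rfl | hij := eq_or_ne i j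
    · exact ⟨1, fun _ => rfl, by simpa [hee] using hscalar i⟩
    · exact (exists_forall_mul_mul_eq_smul hmult hrad (hee i) (hee j) (hoff i j hij)).imp
        fun x hx => ⟨fun h => absurd h hij, hx⟩
  choose x hdiag hspan using hx
  let D : RadSqZeroData K Λᵐᵒᵖ S :=
    { e := fun i => .op (e i)
      arrow := fun b a => .op (e a * x a b * e b)
      J := opRadical Λ
      isTwoSided := inferInstance
      J_mul_J := hrad.opRadical_mul_self
      span_range_e := op_span_eq_top hS
      e_mul_e := fun a => congrArg MulOpposite.op (hee a)
      e_ne_zero := fun a => (MulOpposite.op_ne_zero_iff _).2 (he.1 a).2.1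
      arrow_self := fun a => by rw [hdiag a a rfl, mul_one, hee]
      e_mul_arrow_mul_e := fun b a => MulOpposite.unop_injective <| by
        simp only [MulOpposite.unop_mul, MulOpposite.unop_op, ← mul_assoc, hee]
        simp only [mul_assoc, hee]
      exists_smul_arrow := fun b a r => (hspan a b r.unop).imp fun c hc =>
        MulOpposite.unop_injective <| (mul_assoc _ _ _).symm.trans hc
      arrow_mem := fun {b a} h => mem_opRadical.2 (hoff a b h.symm _)
      e_mul_mul_e_eq_zero := fun a y hy => MulOpposite.unop_injective <|
        (mul_assoc _ _ _).symm.trans (hcorner a y.unop (mem_opRadical.1 hy)) }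
  refine ⟨S, D, fun b a h => ⟨_, hoff a b h.1.symm (x a b), fun hzero => h.2 ?_⟩⟩
  rw [hrad.inRadSq_iff, ← mul_assoc, ← mul_assoc, hee, mul_assoc, hee] at hzero
  exact congrArg MulOpposite.op hzero

end Presentation

theorem tau_tilting_finite_tree_radical_square_zero_is_rep_finite_general
    (K Λ : Type) [Field K] [IsAlgClosed K] [Ring Λ] [Algebra K Λ] [FiniteDimensional K Λ]
    {n : ℕ} {e : Fin n → Λ} (he : IsCompletePrimitiveFamily Λ e)
    (hloop : ∀ i, ¬ HasArrow Λ e i i) (hmult : ArrowMultLE1 Λ K e)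
    (hbip : (QuiverGraph Λ e).IsBipartite) (hrad : RadSqZero Λ) (ht : IsTauTiltingFinite Λ) :
    IsRepFinite Λ := by
  obtain ⟨S, D, hD⟩ := exists_radSqZeroData he hloop hmult hrad
  obtain ⟨color⟩ := hbip
  refine isRepFiniteRing_of_isTauTiltingFiniteRing D (c := fun i => finTwoEquiv (color i))
    (fun b a h => finTwoEquiv.injective.ne ?_) ht
  exact color.valid ⟨Subtype.coe_ne_coe.2 h.1, .inr (hD b a h)⟩

/-- Theorem 4.8(1) of the paper.  Let `Λ` be a
finite-dimensional algebra over an algebraically closed field presented by a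
quiver whose underlying graph is a tree, with radical square zero.  If `Λ` is
τ-tilting-finite, then `Λ` is representation-finite. -/
theorem tau_tilting_finite_tree_radical_square_zero_is_rep_finite
    (K Λ : Type) [Field K] [IsAlgClosed K] [Ring Λ] [Algebra K Λ] [FiniteDimensional K Λ]
    (htree : IsTreeQuiverAlgebra Λ K)
    (hrad : RadSqZero Λ)
    (ht : IsTauTiltingFinite Λ) :
    IsRepFinite Λ := by
  obtain ⟨n, e, he, hloop, -, hmult, htr⟩ := htree
  exact tau_tilting_finite_tree_radical_square_zero_is_rep_finite_general K Λ he hloop hmult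
    htr.isBipartite hrad ht

end PaperSilting
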